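/- arXiv:1201.0697 — 9 statements merged into one kernel-verified Lean document; each statement's English description precedes it below -/
import Mathlib

section
/- For every finite subset W of the vertices of the infinite hexagonal grid G∞, the number of neighbor vertices satisfies |𝒩(W)| ≥ √6 · √|W|. -/
/-- Adjacency of the infinite hexagonal grid `G∞` in brick-wall coordinates on `ℤ × ℤ`:
`(x,y)` and `(x',y')` are adjacent iff `y' = y` and `|x' - x| = 1`, or
`x' = x` and `|y' - y| = 1` and `x + min y y'` is even. -/
def hexAdj (v w : ℤ × ℤ) : Prop :=
  (v.2 = w.2 ∧ (v.1 - w.1).natAbs = 1) ∨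
  (v.1 = w.1 ∧ (v.2 - w.2).natAbs = 1 ∧ Even (v.1 + min v.2 w.2))

/-- The neighborhood `𝒩(W)`: vertices not in `W` adjacent to some vertex of `W`. -/
def hexNbhd (W : Set (ℤ × ℤ)) : Set (ℤ × ℤ) :=
  {v | v ∉ W ∧ ∃ w ∈ W, hexAdj v w}

/-- The boundary `ℬ(W)`: vertices of `W` adjacent to some vertex not in `W`. -/
def hexBdry (W : Set (ℤ × ℤ)) : Set (ℤ × ℤ) :=
  {v | v ∈ W ∧ ∃ w, w ∉ W ∧ hexAdj v w}

/-- The outgoing edges `ℰ(W)`, encoded as ordered pairs `(v, w)` with `v ∈ W`, `w ∉ W`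
and `v` adjacent to `w`; each edge with exactly one endpoint in `W` corresponds to
exactly one such pair. -/
def hexCutEdges (W : Set (ℤ × ℤ)) : Set ((ℤ × ℤ) × (ℤ × ℤ)) :=
  {p | p.1 ∈ W ∧ p.2 ∉ W ∧ hexAdj p.1 p.2}

/-- The hexagonal cell `C(a,b)`, with vertex set `{(2a+b+i, b+j) : i ∈ {0,1,2}, j ∈ {0,1}}`. -/
def hexCell (a b : ℤ) : Set (ℤ × ℤ) :=
  {(2*a+b, b), (2*a+b+1, b), (2*a+b+2, b),
   (2*a+b, b+1), (2*a+b+1, b+1), (2*a+b+2, b+1)}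

/-- The vertex set `V(G_r)` of the finite hexagonal grid of radius `r`: the union of the
cells `C(a,b)` with `(|a| + |b| + |a+b|)/2 ≤ r - 1`. -/
def gridVerts (r : ℕ) : Set (ℤ × ℤ) :=
  {v | ∃ a b : ℤ, a.natAbs + b.natAbs + (a+b).natAbs ≤ 2*(r-1) ∧ v ∈ hexCell a b}

/-- `𝒩_{G_r}(W)`: vertices of `V(G_r) \ W` adjacent to some vertex of `W`. -/
def hexNbhdIn (r : ℕ) (W : Set (ℤ × ℤ)) : Set (ℤ × ℤ) :=
  {v | v ∈ gridVerts r ∧ v ∉ W ∧ ∃ w ∈ W, hexAdj v w}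

/-- `ℬ_{G_r}(W)`: vertices of `W` adjacent to some vertex of `V(G_r) \ W`. -/
def hexBdryIn (r : ℕ) (W : Set (ℤ × ℤ)) : Set (ℤ × ℤ) :=
  {v | v ∈ W ∧ ∃ w, w ∈ gridVerts r ∧ w ∉ W ∧ hexAdj v w}

/-- `ℰ_{G_r}(W)`: the edges of `G_r` with exactly one endpoint in `W ⊆ V(G_r)`, encoded
as ordered pairs `(v, w)` with `v ∈ W`, `w ∈ V(G_r) \ W`, `v` adjacent to `w`. -/
def hexCutEdgesIn (r : ℕ) (W : Set (ℤ × ℤ)) : Set ((ℤ × ℤ) × (ℤ × ℤ)) :=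
  {p | p.1 ∈ W ∧ p.2 ∈ gridVerts r ∧ p.2 ∉ W ∧ hexAdj p.1 p.2}

/-- The index `ind_i(x,y)` of the direction-`i` row containing `(x,y)`
(directions numbered `0, 1, 2` for the paper's `1, 2, 3`):
`ind_1 = y`, `ind_2 = ⌊(y-x)/2⌋`, `ind_3 = ⌊(x+y)/2⌋`. -/
def rowInd : Fin 3 → ℤ × ℤ → ℤ
  | 0, v => v.2
  | 1, v => Int.fdiv (v.2 - v.1) 2
  | 2, v => Int.fdiv (v.1 + v.2) 2

/-- The linear parameter `p_i` along direction-`i` rows: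
`p_1 = x`, `p_2 = x + y`, `p_3 = x - y`. -/
def rowParam : Fin 3 → ℤ × ℤ → ℤ
  | 0, v => v.1
  | 1, v => v.1 + v.2
  | 2, v => v.1 - v.2

/-- A set of integers is consecutive if it contains every integer between any two of
its elements. -/
def ConsecutiveSet (S : Set ℤ) : Prop :=
  ∀ a ∈ S, ∀ b ∈ S, ∀ k : ℤ, a ≤ k → k ≤ b → k ∈ S

/-- `v` is an outermost neighbor of `W` for direction `i`: the direction-`i` row of `v`
is gray, and the parameter of `v` is `m - 1` or `M + 1`, where `m` and `M` are the
minimum and maximum of the parameter over `W` intersected with that row. -/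
def IsOutermostNeighbor (W : Set (ℤ × ℤ)) (i : Fin 3) (v : ℤ × ℤ) : Prop :=
  (rowParam i v + 1 ∈ rowParam i '' {w ∈ W | rowInd i w = rowInd i v} ∧
    ∀ q ∈ rowParam i '' {w ∈ W | rowInd i w = rowInd i v}, rowParam i v + 1 ≤ q) ∨
  (rowParam i v - 1 ∈ rowParam i '' {w ∈ W | rowInd i w = rowInd i v} ∧
    ∀ q ∈ rowParam i '' {w ∈ W | rowInd i w = rowInd i v}, q ≤ rowParam i v - 1)

/-- The pairs of `B × C` whose sum lies in `D`. -/
def pairsWithSum (B C D : Finset ℤ) : Finset (ℤ × ℤ) :=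
  (B ×ˢ C).filter fun z => z.1 + z.2 ∈ D

lemma card_pairsWithSum_le_mul (B C D : Finset ℤ) :
    (pairsWithSum B C D).card ≤ B.card * C.card := by
  rw [← Finset.card_product]
  exact Finset.card_filter_le _ _

lemma card_pairsWithSum_le_mul_left (B C D : Finset ℤ) :
    (pairsWithSum B C D).card ≤ D.card * B.card := by
  rw [← Finset.card_product]
  refine Finset.card_le_card_of_injOn (fun z => (z.1 + z.2, z.1)) ?_ ?_
  · intro z hz
    simp only [pairsWithSum, Finset.coe_filter, Finset.mem_product, Set.mem_ofPred_eq] at hz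
    simp [hz]
  · rintro ⟨b, c⟩ - ⟨b', c'⟩ - h
    simp only [Prod.mk.injEq] at h ⊢
    omega

lemma card_pairsWithSum_le_mul_right (B C D : Finset ℤ) :
    (pairsWithSum B C D).card ≤ D.card * C.card := by
  rw [← Finset.card_product]
  refine Finset.card_le_card_of_injOn (fun z => (z.1 + z.2, z.2)) ?_ ?_
  · intro z hz
    simp only [pairsWithSum, Finset.coe_filter, Finset.mem_product, Set.mem_ofPred_eq] at hz
    simp [hz]
  · rintro ⟨b, c⟩ - ⟨b', c'⟩ - h
    simp only [Prod.mk.injEq] at h ⊢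
    omega

/-- A Pollard-type inequality in `ℤ`: removing the maximum of `B` and the minimum of `C` destroys
at most one representation `b + c = d` of each `d`. -/
lemma card_pairsWithSum_le (t : ℕ) : ∀ (q s : ℕ) (B C D : Finset ℤ),
    B.card = t + q → C.card = t + s → (pairsWithSum B C D).card ≤ t * D.card + q * s := by
  induction t with
  | zero =>
    intro q s B C D hB hC
    have h := card_pairsWithSum_le_mul B C D
    simpa [hB, hC] using h
  | succ t ih =>
    intro q s B C D hB hC
    have hBne : B.Nonempty := Finset.card_pos.mp (by omega)
    have hCne : C.Nonempty := Finset.card_pos.mp (by omega)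
    obtain ⟨β, hβ, hβmax⟩ := B.exists_max_image id hBne
    obtain ⟨γ, hγ, hγmin⟩ := C.exists_min_image id hCne
    simp only [id] at hβmax hγmin
    have hrec := ih q s (B.erase β) (C.erase γ) D
      (by rw [Finset.card_erase_of_mem hβ]; omega) (by rw [Finset.card_erase_of_mem hγ]; omega)
    set E := (pairsWithSum B C D).filter fun z => z.1 = β ∨ z.2 = γ with hE
    have hEcard : E.card ≤ D.card := by
      refine Finset.card_le_card_of_injOn (fun z => z.1 + z.2) ?_ ?_
      · intro z hz
        simp only [hE, pairsWithSum, Finset.coe_filter, Finset.mem_filter, Finset.mem_product,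
          Set.mem_ofPred_eq] at hz
        exact hz.1.2
      · rintro ⟨b, c⟩ hz ⟨b', c'⟩ hz' h
        simp only [hE, pairsWithSum, Finset.coe_filter, Finset.mem_filter, Finset.mem_product,
          Set.mem_ofPred_eq] at hz hz' h
        have h₁ := hβmax b hz.1.1.1
        have h₂ := hβmax b' hz'.1.1.1
        have h₃ := hγmin c hz.1.1.2
        have h₄ := hγmin c' hz'.1.1.2
        simp only [Prod.mk.injEq]
        omega
    have hsub : pairsWithSum B C D ⊆ pairsWithSum (B.erase β) (C.erase γ) D ∪ E := by
      intro z hz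
      by_cases hzE : z.1 = β ∨ z.2 = γ
      · exact Finset.mem_union_right _ (Finset.mem_filter.mpr ⟨hz, hzE⟩)
      · refine Finset.mem_union_left _ ?_
        simp only [pairsWithSum, Finset.mem_filter, Finset.mem_product, Finset.mem_erase] at hz ⊢
        tauto
    have h := (Finset.card_le_card hsub).trans (Finset.card_union_le _ _)
    calc _ ≤ _ := h
      _ ≤ (t * D.card + q * s) + D.card := add_le_add hrec hEcard
      _ = _ := by ring

lemma card_pairsWithSum_union_add_inter (B C D D' : Finset ℤ) :
    (pairsWithSum B C (D ∪ D')).card + (pairsWithSum B C (D ∩ D')).card =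
      (pairsWithSum B C D).card + (pairsWithSum B C D').card := by
  simp only [pairsWithSum, Finset.mem_union, Finset.mem_inter, Finset.filter_or,
    Finset.filter_and]
  exact Finset.card_union_add_card_inter _ _

lemma card_inter_image_sub_one_lt {A : Finset ℤ} (hA : A.Nonempty) :
    (A ∩ A.image (· - 1)).card < A.card := by
  obtain ⟨a, ha, hmax⟩ := A.exists_max_image id hA
  refine Finset.card_lt_card (Finset.ssubset_iff_subset_ne.mpr ⟨Finset.inter_subset_left, ?_⟩)
  intro h
  rw [← h, Finset.mem_inter, Finset.mem_image] at ha
  obtain ⟨-, b, hb, hba⟩ := ha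
  have := hmax b hb
  simp only [id] at this
  omega

/-- The number of triples `(a, b, c) ∈ A × B × C` with `a - b - c ∈ {0, 1}` is at most
`(|A| + |B| + |C|)² / 6`. -/
lemma six_mul_card_pairsWithSum_add_le (A B C : Finset ℤ) :
    6 * ((pairsWithSum B C A).card + (pairsWithSum B C (A.image (· - 1))).card) ≤
      (A.card + B.card + C.card) ^ 2 := by
  rcases A.eq_empty_or_nonempty with rfl | hA
  · simp [pairsWithSum]
  have hshift : (A.image (· - 1)).card = A.card :=
    Finset.card_image_of_injective _ sub_left_injective
  have hinter := card_inter_image_sub_one_lt hA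
  have hui := Finset.card_union_add_card_inter A (A.image (· - 1))
  have hsum := card_pairsWithSum_union_add_inter B C A (A.image (· - 1))
  set A' := A.image (· - 1)
  rw [hshift] at hui
  by_cases hsmallBC : B.card + C.card ≤ A.card
  · have h₁ := card_pairsWithSum_le_mul B C A
    have h₂ := card_pairsWithSum_le_mul B C A'
    zify at *
    nlinarith [sq_nonneg ((B.card : ℤ) - C.card)]
  by_cases hsmallAB : A.card + B.card ≤ C.card
  · have h₁ := card_pairsWithSum_le_mul_left B C A
    have h₂ := card_pairsWithSum_le_mul_left B C A'
    rw [hshift] at h₂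
    zify at *
    nlinarith [sq_nonneg ((B.card : ℤ) - A.card)]
  by_cases hsmallAC : A.card + C.card ≤ B.card
  · have h₁ := card_pairsWithSum_le_mul_right B C A
    have h₂ := card_pairsWithSum_le_mul_right B C A'
    rw [hshift] at h₂
    zify at *
    nlinarith [sq_nonneg ((C.card : ℤ) - A.card)]
  obtain ⟨t, ht⟩ : ∃ t, B.card + C.card = A.card + 2 * t ∨
      B.card + C.card = A.card + (2 * t + 1) :=
    ⟨(B.card + C.card - A.card) / 2, by omega⟩
  obtain ⟨q, hq⟩ : ∃ q, B.card = t + q := ⟨B.card - t, by omega⟩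
  obtain ⟨s, hs⟩ : ∃ s, C.card = t + s := ⟨C.card - t, by omega⟩
  have hU := card_pairsWithSum_le t q s B C (A ∪ A') hq hs
  rw [← hsum]
  rcases ht with ht | ht
  · have hI := card_pairsWithSum_le t q s B C (A ∩ A') hq hs
    have hp : A.card = q + s := by omega
    have hw : t * (A ∪ A').card + t * (A ∩ A').card = t * (2 * A.card) := by
      rw [← mul_add, hui]; ring
    rw [hq, hs, hp] at *
    zify at *
    nlinarith [sq_nonneg ((q : ℤ) + s - 2 * t), sq_nonneg ((q : ℤ) - s)]
  · obtain ⟨q, rfl⟩ : ∃ q', q = q' + 1 := ⟨q - 1, by omega⟩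
    obtain ⟨s, rfl⟩ : ∃ s', s = s' + 1 := ⟨s - 1, by omega⟩
    have hI := card_pairsWithSum_le (t + 1) q s B C (A ∩ A') (by omega) (by omega)
    have hp : A.card = q + s + 1 := by omega
    have hw : t * (A ∪ A').card + t * (A ∩ A').card = t * (2 * A.card) := by
      rw [← mul_add, hui]; ring
    have hn : (pairsWithSum B C (A ∪ A')).card + (pairsWithSum B C (A ∩ A')).card ≤
        2 * t * (q + s + 1) + (q + s) + (q + 1) * (s + 1) + q * s := by
      rw [hp] at hw hinter
      linarith
    rw [hq, hs, hp]
    zify at hn ⊢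
    nlinarith only [hn, sq_nonneg ((q : ℤ) + s - 2 * t), sq_nonneg ((q : ℤ) - s)]

/-- If `V` is partitioned into rows by `ind`, each a line traversed by `next` and `prev`, then every
row meeting `W` contains two points outside `W` with exactly one row neighbour in `W`. -/
lemma two_mul_card_image_le {V : Type*} [DecidableEq V] (ind par : V → ℤ) (next prev : V → V)
    (hnext : ∀ v, ind (next v) = ind v ∧ par (next v) = par v + 1 ∧ prev (next v) = v)
    (hprev : ∀ v, ind (prev v) = ind v ∧ par (prev v) = par v - 1 ∧ next (prev v) = v)
    (W T : Finset V)
    (hT : ∀ v, v ∉ W → Xor (next v ∈ W) (prev v ∈ W) → v ∈ T) :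
    2 * (W.image ind).card ≤ T.card := by
  have hfiber : ∀ k ∈ W.image ind, 2 ≤ (T.filter fun v => ind v = k).card := by
    intro k hk
    obtain ⟨w₀, hw₀, hk₀⟩ := Finset.mem_image.mp hk
    have hne : (W.filter fun v => ind v = k).Nonempty := ⟨w₀, by simp [hw₀, hk₀]⟩
    obtain ⟨M, hM, hmax⟩ := Finset.exists_max_image _ par hne
    obtain ⟨m, hm, hmin⟩ := Finset.exists_min_image _ par hne
    simp only [Finset.mem_filter, and_imp] at hM hm hmax hmin
    have above : ∀ v, ind v = k → par M < par v → v ∉ W :=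
      fun v hv hlt hvW => absurd (hmax v hvW hv) (by omega)
    have below : ∀ v, ind v = k → par v < par m → v ∉ W :=
      fun v hv hlt hvW => absurd (hmin v hvW hv) (by omega)
    have hmM := hmax m hm.1 hm.2
    obtain ⟨hM₁, hM₂, hM₃⟩ := hnext M
    obtain ⟨hM₄, hM₅, -⟩ := hnext (next M)
    obtain ⟨hm₁, hm₂, hm₃⟩ := hprev m
    obtain ⟨hm₄, hm₅, -⟩ := hprev (prev m)
    rw [← Nat.lt_iff_add_one_le, Finset.one_lt_card]
    refine ⟨next M, Finset.mem_filter.mpr ⟨hT _ ?_ (Or.inr ⟨?_, ?_⟩), by omega⟩,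
      prev m, Finset.mem_filter.mpr ⟨hT _ ?_ (Or.inl ⟨?_, ?_⟩), by omega⟩, ?_⟩
    · exact above _ (by omega) (by omega)
    · rw [hM₃]; exact hM.1
    · exact above _ (by omega) (by omega)
    · exact below _ (by omega) (by omega)
    · rw [hm₃]; exact hm.1
    · exact below _ (by omega) (by omega)
    · intro h
      rw [h] at hM₂
      omega
  calc 2 * (W.image ind).card = ∑ _k ∈ W.image ind, 2 := by simp [mul_comm]
    _ ≤ ∑ k ∈ W.image ind, (T.filter fun v => ind v = k).card := Finset.sum_le_sum hfiber
    _ ≤ T.card := by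
      rw [Finset.sum_card_fiberwise_eq_card_filter]
      exact Finset.card_filter_le _ _

/-- The right neighbour of a vertex. -/
def hexRight (v : ℤ × ℤ) : ℤ × ℤ := (v.1 + 1, v.2)

/-- The left neighbour of a vertex. -/
def hexLeft (v : ℤ × ℤ) : ℤ × ℤ := (v.1 - 1, v.2)

/-- The vertical neighbour of a vertex. -/
def hexVert (v : ℤ × ℤ) : ℤ × ℤ := (v.1, if (v.1 + v.2) % 2 = 0 then v.2 + 1 else v.2 - 1)

lemma hexAdj_hexRight (v : ℤ × ℤ) : hexAdj v (hexRight v) :=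
  Or.inl ⟨rfl, by simp [hexRight]⟩

lemma hexAdj_hexLeft (v : ℤ × ℤ) : hexAdj v (hexLeft v) :=
  Or.inl ⟨rfl, by simp [hexLeft]⟩

lemma hexAdj_hexVert (v : ℤ × ℤ) : hexAdj v (hexVert v) := by
  refine Or.inr ⟨rfl, ?_, ?_⟩
  · simp only [hexVert]
    split_ifs <;> omega
  · rw [Int.even_iff]
    simp only [hexVert]
    split_ifs <;> omega

lemma eq_of_hexAdj {v w : ℤ × ℤ} (h : hexAdj v w) :
    w = hexRight v ∨ w = hexLeft v ∨ w = hexVert v := by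
  obtain ⟨x, y⟩ := v
  obtain ⟨x', y'⟩ := w
  simp only [hexAdj, Int.even_iff] at h
  simp only [hexRight, hexLeft, hexVert, Prod.mk.injEq]
  split_ifs <;> omega

lemma finite_hexNbhd {W : Set (ℤ × ℤ)} (hW : W.Finite) : (hexNbhd W).Finite := by
  refine ((hW.image hexRight).union ((hW.image hexLeft).union (hW.image hexVert))).subset ?_
  rintro v ⟨-, w, hw, hvw⟩
  have hwv : hexAdj w v := by
    simp only [hexAdj, Int.even_iff] at hvw ⊢
    omega
  rcases eq_of_hexAdj hwv with h | h | h
  · exact Or.inl ⟨w, hw, h.symm⟩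
  · exact Or.inr (Or.inl ⟨w, hw, h.symm⟩)
  · exact Or.inr (Or.inr ⟨w, hw, h.symm⟩)

/-- The total number of rows, over the three directions, that meet `W` is at most `|𝒩(W)|`. -/
lemma card_rows_le_card_nbhd (W N : Finset (ℤ × ℤ))
    (hN : ∀ v, v ∉ W → (∃ w ∈ W, hexAdj v w) → v ∈ N) :
    (W.image fun v => v.2).card + (W.image fun v => (v.2 - v.1) / 2).card +
      (W.image fun v => (v.1 + v.2) / 2).card ≤ N.card := by
  classical
  set T₀ := N.filter fun v => Xor (hexRight v ∈ W) (hexLeft v ∈ W) with hT₀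
  set T₁ := N.filter fun v => if (v.1 + v.2) % 2 = 0 then Xor (hexVert v ∈ W) (hexLeft v ∈ W)
    else Xor (hexRight v ∈ W) (hexVert v ∈ W) with hT₁
  set T₂ := N.filter fun v => if (v.1 + v.2) % 2 = 0 then Xor (hexRight v ∈ W) (hexVert v ∈ W)
    else Xor (hexVert v ∈ W) (hexLeft v ∈ W) with hT₂
  have hR := fun v hv hw => hN v hv ⟨_, hw, hexAdj_hexRight v⟩
  have hL := fun v hv hw => hN v hv ⟨_, hw, hexAdj_hexLeft v⟩
  have hV := fun v hv hw => hN v hv ⟨_, hw, hexAdj_hexVert v⟩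
  have h₀ : 2 * (W.image fun v => v.2).card ≤ T₀.card := by
    refine two_mul_card_image_le _ (fun v => v.1) hexRight hexLeft ?_ ?_ W T₀ ?_
    · rintro ⟨x, y⟩
      simp [hexRight, hexLeft]
    · rintro ⟨x, y⟩
      simp [hexRight, hexLeft]
    · intro v hv hx
      refine Finset.mem_filter.mpr ⟨?_, hx⟩
      rcases hx with h | h
      exacts [hR v hv h.1, hL v hv h.1]
  have h₁ : 2 * (W.image fun v => (v.2 - v.1) / 2).card ≤ T₁.card := by
    refine two_mul_card_image_le _ (fun v => v.1 + v.2)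
      (fun v => if (v.1 + v.2) % 2 = 0 then hexVert v else hexRight v)
      (fun v => if (v.1 + v.2) % 2 = 0 then hexLeft v else hexVert v) ?_ ?_ W T₁ ?_
    · rintro ⟨x, y⟩
      simp only [hexRight, hexLeft, hexVert]
      grind
    · rintro ⟨x, y⟩
      simp only [hexRight, hexLeft, hexVert]
      grind
    · intro v hv hx
      rw [hT₁, Finset.mem_filter]
      split_ifs at hx ⊢ <;> refine ⟨?_, hx⟩ <;> rcases hx with h | h
      exacts [hV v hv h.1, hL v hv h.1, hR v hv h.1, hV v hv h.1]
  have h₂ : 2 * (W.image fun v => (v.1 + v.2) / 2).card ≤ T₂.card := by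
    refine two_mul_card_image_le _ (fun v => v.1 - v.2)
      (fun v => if (v.1 + v.2) % 2 = 0 then hexRight v else hexVert v)
      (fun v => if (v.1 + v.2) % 2 = 0 then hexVert v else hexLeft v) ?_ ?_ W T₂ ?_
    · rintro ⟨x, y⟩
      simp only [hexRight, hexLeft, hexVert]
      grind
    · rintro ⟨x, y⟩
      simp only [hexRight, hexLeft, hexVert]
      grind
    · intro v hv hx
      rw [hT₂, Finset.mem_filter]
      split_ifs at hx ⊢ <;> refine ⟨?_, hx⟩ <;> rcases hx with h | h
      exacts [hR v hv h.1, hV v hv h.1, hV v hv h.1, hL v hv h.1]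
  have hcount : T₀.card + T₁.card + T₂.card ≤ 2 * N.card := by
    simp only [hT₀, hT₁, hT₂, Finset.card_filter]
    rw [← Finset.sum_add_distrib, ← Finset.sum_add_distrib, mul_comm, ← smul_eq_mul]
    refine Finset.sum_le_card_nsmul _ _ _ fun v _ => ?_
    by_cases he : (v.1 + v.2) % 2 = 0 <;> by_cases hr : hexRight v ∈ W <;>
      by_cases hl : hexLeft v ∈ W <;> by_cases hv : hexVert v ∈ W <;>
      simp only [he, hr, hl, hv, xor_def] <;> decide
  omega

/-- A vertex is determined by its parity and its row indices in two directions, the third index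
being their sum, up to a shift by one for odd vertices. -/
lemma card_le_card_pairsWithSum (W : Finset (ℤ × ℤ)) :
    W.card ≤
      (pairsWithSum (W.image fun v => (v.2 - v.1) / 2) (W.image fun v => (v.1 + v.2) / 2)
        (W.image fun v => v.2)).card +
      (pairsWithSum (W.image fun v => (v.2 - v.1) / 2) (W.image fun v => (v.1 + v.2) / 2)
        ((W.image fun v => v.2).image (· - 1))).card := by
  rw [← Finset.card_filter_add_card_filter_not (s := W) (fun v => (v.1 + v.2) % 2 = 0)]
  refine add_le_add
    (Finset.card_le_card_of_injOn (fun v => ((v.2 - v.1) / 2, (v.1 + v.2) / 2)) ?_ ?_)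
    (Finset.card_le_card_of_injOn (fun v => ((v.2 - v.1) / 2, (v.1 + v.2) / 2)) ?_ ?_)
  · intro v hv
    rw [Finset.mem_coe, Finset.mem_filter] at hv
    rw [Finset.mem_coe, pairsWithSum, Finset.mem_filter, Finset.mem_product]
    exact ⟨⟨Finset.mem_image_of_mem _ hv.1, Finset.mem_image_of_mem _ hv.1⟩,
      Finset.mem_image.mpr ⟨v, hv.1, by dsimp only; omega⟩⟩
  · rintro ⟨x, y⟩ hv ⟨x', y'⟩ hv' h
    simp only [Finset.mem_coe, Finset.mem_filter, Prod.mk.injEq] at hv hv' h ⊢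
    omega
  · intro v hv
    rw [Finset.mem_coe, Finset.mem_filter] at hv
    rw [Finset.mem_coe, pairsWithSum, Finset.mem_filter, Finset.mem_product]
    exact ⟨⟨Finset.mem_image_of_mem _ hv.1, Finset.mem_image_of_mem _ hv.1⟩,
      Finset.mem_image.mpr ⟨v.2, Finset.mem_image_of_mem _ hv.1, by dsimp only; omega⟩⟩
  · rintro ⟨x, y⟩ hv ⟨x', y'⟩ hv' h
    simp only [Finset.mem_coe, Finset.mem_filter, Prod.mk.injEq] at hv hv' h ⊢
    omega

/-- For every finite subset `W` of the vertices of the infinite hexagonal grid,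
`|𝒩(W)| ≥ √6 · √|W|`. -/
theorem infinite_hex_neighbor_isoperimetric (W : Set (ℤ × ℤ)) (hW : W.Finite) :
    Real.sqrt 6 * Real.sqrt W.ncard ≤ ((hexNbhd W).ncard : ℝ) := by
  have hNfin := finite_hexNbhd hW
  rw [Set.ncard_eq_toFinset_card W hW, Set.ncard_eq_toFinset_card _ hNfin]
  have hrows := card_rows_le_card_nbhd hW.toFinset hNfin.toFinset (by
    intro v hv hex
    simp only [Set.Finite.mem_toFinset] at hv hex ⊢
    exact ⟨hv, hex⟩)
  have hmain : 6 * hW.toFinset.card ≤ hNfin.toFinset.card ^ 2 :=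
    calc _ ≤ _ := Nat.mul_le_mul_left 6 (card_le_card_pairsWithSum hW.toFinset)
      _ ≤ _ := six_mul_card_pairsWithSum_add_le _ _ _
      _ ≤ _ := Nat.pow_le_pow_left hrows 2
  rw [← Real.sqrt_mul (by norm_num)]
  exact Real.sqrt_le_iff.mpr ⟨by positivity, by exact_mod_cast hmain⟩
end

section
/- The constant √6 is optimal in the neighbor-isoperimetric inequality on the infinite hexagonal grid: if c is a real number such that |𝒩(W)| ≥ c · √|W| holds for every finite nonempty subset W of the vertices of G∞, then c ≤ √6. -/
/-- A single hexagonal cell has six vertices. -/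
theorem ncard_hexCell_zero : (hexCell 0 0).ncard = 6 := by
  have e : hexCell 0 0 =
      (({(0, 0), (1, 0), (2, 0), (0, 1), (1, 1), (2, 1)} : Finset (ℤ × ℤ)) : Set (ℤ × ℤ)) := by
    simp [hexCell]
  rw [e, Set.ncard_coe_finset]
  decide

theorem mem_hexCell_zero {x y : ℤ} :
    (x, y) ∈ hexCell 0 0 ↔ (0 ≤ x ∧ x ≤ 2) ∧ 0 ≤ y ∧ y ≤ 1 := by
  simp only [hexCell, Set.mem_insert_iff, Set.mem_singleton_iff, Prod.mk.injEq]
  omega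

/-- A single hexagonal cell has at most six neighbors. -/
theorem ncard_hexNbhd_hexCell_zero_le : (hexNbhd (hexCell 0 0)).ncard ≤ 6 := by
  have hsub : hexNbhd (hexCell 0 0) ⊆
      (({(-1, 0), (3, 0), (-1, 1), (3, 1), (1, -1), (1, 2)} : Finset (ℤ × ℤ)) :
        Set (ℤ × ℤ)) := by
    rintro ⟨x, y⟩ ⟨hv, ⟨a, b⟩, hw, hadj⟩
    rw [mem_hexCell_zero] at hv hw
    simp only [hexAdj, Int.even_iff] at hadj
    simp only [Set.mem_insert_iff, Set.mem_singleton_iff, Prod.mk.injEq,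
      Finset.coe_insert, Finset.coe_singleton]
    obtain ⟨⟨ha, ha'⟩, hb, hb'⟩ := hw
    interval_cases a <;> interval_cases b <;> omega
  refine (Set.ncard_le_ncard hsub (Finset.finite_toSet _)).trans ?_
  rw [Set.ncard_coe_finset]
  decide

/-- The constant `√6` is optimal in the neighbor-isoperimetric inequality on the
infinite hexagonal grid. -/
theorem infinite_hex_neighbor_constant_optimal (c : ℝ)
    (h : ∀ W : Set (ℤ × ℤ), W.Finite → W.Nonempty →
      c * Real.sqrt W.ncard ≤ ((hexNbhd W).ncard : ℝ)) :
    c ≤ Real.sqrt 6 := by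
  have hfin : (hexCell 0 0).Finite := by simp [hexCell]
  have hne : (hexCell 0 0).Nonempty := ⟨(0, 0), by simp [hexCell]⟩
  have hc := h _ hfin hne
  rw [ncard_hexCell_zero] at hc
  have hn : ((hexNbhd (hexCell 0 0)).ncard : ℝ) ≤ 6 := by
    exact_mod_cast ncard_hexNbhd_hexCell_zero_le
  have hsq : Real.sqrt 6 * Real.sqrt 6 = 6 := Real.mul_self_sqrt (by norm_num)
  refine le_of_mul_le_mul_right ?_ (Real.sqrt_pos.2 (by norm_num : (0 : ℝ) < 6))
  push_cast at hc
  linarith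
end

section
/- For every finite subset W of the vertices of the infinite hexagonal grid G∞, the number of outgoing edges satisfies |ℰ(W)| ≥ √6 · √|W|. -/
section Sumset

/-- The pairs in `B × C` whose sum lies in `A`. -/
def pairsWithSumIn (A B C : Finset ℤ) : Finset (ℤ × ℤ) :=
  (B ×ˢ C).filter fun z => z.1 + z.2 ∈ A

/-- Removing the smallest element of `B` and the largest element of `C` removes a hook of pairs
with pairwise distinct sums. -/
lemma exists_hook (B C : Finset ℤ) (hB : B.Nonempty) (hC : C.Nonempty) :
    ∃ B' C' H : Finset ℤ, B'.card + 1 = B.card ∧ C'.card + 1 = C.card ∧ H.Nonempty ∧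
      H.card + 1 ≤ B.card + C.card ∧
      ∀ A, (pairsWithSumIn A B C).card ≤ (pairsWithSumIn A B' C').card + (H ∩ A).card := by
  classical
  set b₀ := B.min' hB
  set c₀ := C.max' hC
  have hb₀ : b₀ ∈ B := B.min'_mem hB
  have hc₀ : c₀ ∈ C := C.max'_mem hC
  have hle : ∀ b ∈ B, b₀ ≤ b := fun b hb => B.min'_le b hb
  have hge : ∀ c ∈ C, c ≤ c₀ := fun c hc => C.le_max' c hc
  have hcB := Finset.card_erase_add_one hb₀
  have hcC := Finset.card_erase_add_one hc₀
  refine ⟨B.erase b₀, C.erase c₀,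
    C.image (b₀ + ·) ∪ (B.erase b₀).image (· + c₀), hcB, hcC, ?_, ?_, ?_⟩
  · exact ⟨b₀ + c₀, Finset.mem_union_left _ (Finset.mem_image_of_mem _ hc₀)⟩
  · have h₁ := Finset.card_union_le (C.image (b₀ + ·)) ((B.erase b₀).image (· + c₀))
    have h₂ : (C.image (b₀ + ·)).card ≤ C.card := Finset.card_image_le
    have h₃ : ((B.erase b₀).image (· + c₀)).card ≤ (B.erase b₀).card := Finset.card_image_le
    omega
  · intro A
    set K := (pairsWithSumIn A B C).filter fun z => z.1 = b₀ ∨ z.2 = c₀ with hK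
    have hsub : pairsWithSumIn A B C ⊆
        pairsWithSumIn A (B.erase b₀) (C.erase c₀) ∪ K := by
      intro z hz
      simp only [hK, pairsWithSumIn, Finset.mem_filter, Finset.mem_union, Finset.mem_product,
        Finset.mem_erase] at hz ⊢
      tauto
    have hcard : K.card ≤
        ((C.image (b₀ + ·) ∪ (B.erase b₀).image (· + c₀)) ∩ A).card := by
      refine Finset.card_le_card_of_injOn (fun z => z.1 + z.2) ?_ ?_
      · rintro ⟨b, c⟩ hz
        simp only [hK, pairsWithSumIn, Finset.coe_filter, Finset.mem_filter, Finset.mem_product,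
          Set.mem_ofPred_eq] at hz
        obtain ⟨⟨⟨hb, hc⟩, hA⟩, h⟩ := hz
        simp only [Finset.coe_inter, Finset.coe_union, Finset.coe_image, Set.mem_inter_iff,
          Set.mem_union, Set.mem_image, Finset.mem_coe, Finset.mem_erase]
        refine ⟨?_, hA⟩
        by_cases hbb : b = b₀
        · exact Or.inl ⟨c, hc, by rw [hbb]⟩
        · exact Or.inr ⟨b, ⟨hbb, hb⟩, by rw [h.resolve_left hbb]⟩
      · rintro ⟨b, c⟩ hz ⟨b', c'⟩ hz' heq
        simp only [hK, pairsWithSumIn, Finset.coe_filter, Finset.mem_filter, Finset.mem_product,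
          Set.mem_ofPred_eq] at hz hz' heq
        have := hle b hz.1.1.1
        have := hle b' hz'.1.1.1
        have := hge c hz.1.1.2
        have := hge c' hz'.1.1.2
        rw [Prod.mk.injEq]
        omega
    calc (pairsWithSumIn A B C).card
        ≤ (pairsWithSumIn A (B.erase b₀) (C.erase c₀) ∪ K).card := Finset.card_le_card hsub
      _ ≤ _ := (Finset.card_union_le _ _).trans (Nat.add_le_add_left hcard _)

/-- The number of `(b, c, ε) ∈ B × C × {0, 1}` with `b + c + ε ∈ A`. -/
def layeredCount (A B C : Finset ℤ) : ℕ :=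
  (pairsWithSumIn A B C).card + (pairsWithSumIn (A.image (· - 1)) B C).card

lemma card_image_sub_one (A : Finset ℤ) : (A.image (· - 1)).card = A.card :=
  Finset.card_image_of_injective _ fun _ _ h => by simpa using h

lemma layeredCount_le (A B C : Finset ℤ) : layeredCount A B C ≤ 2 * (B.card * C.card) := by
  have h : ∀ A, (pairsWithSumIn A B C).card ≤ B.card * C.card := fun A => by
    rw [← Finset.card_product]
    exact Finset.card_filter_le _ _
  have h₁ := h A
  have h₂ := h (A.image (· - 1))
  unfold layeredCount
  omega

/-- A nonempty finite set of integers and its translate by one do not coincide, so their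
intersections with `A` cannot both be as large as possible. -/
lemma card_inter_add_card_inter_shift (A H : Finset ℤ) (hH : H.Nonempty) :
    (H ∩ A).card + (H ∩ A.image (· - 1)).card + 1 ≤ A.card + H.card := by
  classical
  have hshift : (H ∩ A.image (· - 1)).card = (H.image (· + 1) ∩ A).card := by
    rw [← Finset.card_image_of_injective (H ∩ A.image (· - 1)) (add_left_injective (1 : ℤ))]
    congr 1
    ext x
    simp only [Finset.mem_image, Finset.mem_inter]
    constructor
    · rintro ⟨y, ⟨hy, a, ha, rfl⟩, rfl⟩
      exact ⟨⟨a - 1, hy, rfl⟩, by simpa using ha⟩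
    · rintro ⟨⟨y, hy, rfl⟩, hA⟩
      exact ⟨y, ⟨hy, y + 1, hA, by ring⟩, rfl⟩
  rw [hshift, ← Finset.card_union_add_card_inter]
  have h₁ : (H ∩ A ∪ H.image (· + 1) ∩ A).card ≤ A.card :=
    Finset.card_le_card (Finset.union_subset Finset.inter_subset_right Finset.inter_subset_right)
  have h₂ : (H ∩ A ∩ (H.image (· + 1) ∩ A)).card < H.card := by
    refine Finset.card_lt_card
      ⟨fun x hx => (Finset.mem_inter.1 (Finset.mem_inter.1 hx).1).1, fun h => ?_⟩
    have hm := (Finset.mem_inter.1 (Finset.mem_inter.1 (h (H.min'_mem hH))).2).1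
    obtain ⟨y, hy, hyx⟩ := Finset.mem_image.1 hm
    have := H.min'_le y hy
    omega
  omega

/-- Splitting off one hook changes the layered count by at most `2 |A|`, and by at most
`|A| + |B| + |C| - 2`. -/
lemma exists_layeredCount_le_add (A B C : Finset ℤ) (hB : B.Nonempty) (hC : C.Nonempty) :
    ∃ B' C' : Finset ℤ, B'.card + 1 = B.card ∧ C'.card + 1 = C.card ∧
      layeredCount A B C ≤ layeredCount A B' C' + 2 * A.card ∧
      layeredCount A B C + 2 ≤ layeredCount A B' C' + A.card + B.card + C.card := by
  obtain ⟨B', C', H, hB', hC', hH, hHcard, hbound⟩ := exists_hook B C hB hC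
  have h₁ := hbound A
  have h₂ := hbound (A.image (· - 1))
  have h₃ := card_inter_add_card_inter_shift A H hH
  have h₄ : (H ∩ A).card ≤ A.card := Finset.card_le_card Finset.inter_subset_right
  have h₅ : (H ∩ A.image (· - 1)).card ≤ A.card :=
    (Finset.card_le_card Finset.inter_subset_right).trans (card_image_sub_one A).le
  refine ⟨B', C', hB', hC', ?_, ?_⟩ <;> unfold layeredCount <;> omega

lemma layeredCount_le_of_card_eq_add (A : Finset ℤ) (u v t : ℕ) (B C : Finset ℤ)
    (hB : B.card = u + t) (hC : C.card = v + t) :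
    layeredCount A B C ≤ 2 * A.card * t + 2 * (u * v) := by
  induction t generalizing B C with
  | zero => simpa [hB, hC] using layeredCount_le A B C
  | succ t ih =>
    obtain ⟨B', C', hB', hC', h, -⟩ := exists_layeredCount_le_add A B C
      (Finset.card_pos.1 (by omega)) (Finset.card_pos.1 (by omega))
    have := ih B' C' (by omega) (by omega)
    rw [mul_add]
    omega

lemma layeredCount_le_of_card_eq_add_add_one (A : Finset ℤ) (u v t : ℕ) (B C : Finset ℤ)
    (hB : B.card = u + t + 1) (hC : C.card = v + t + 1) :
    layeredCount A B C ≤ 2 * A.card * t + A.card + (2 * (u * v) + u + v) := by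
  induction t generalizing B C with
  | zero =>
    obtain ⟨B', C', hB', hC', -, h⟩ := exists_layeredCount_le_add A B C
      (Finset.card_pos.1 (by omega)) (Finset.card_pos.1 (by omega))
    have h' := layeredCount_le A B' C'
    rw [show B'.card = u by omega, show C'.card = v by omega] at h'
    omega
  | succ t ih =>
    obtain ⟨B', C', hB', hC', h, -⟩ := exists_layeredCount_le_add A B C
      (Finset.card_pos.1 (by omega)) (Finset.card_pos.1 (by omega))
    have := ih B' C' (by omega) (by omega)
    rw [mul_add]
    omega

theorem six_mul_layeredCount_le (A B C : Finset ℤ) :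
    6 * layeredCount A B C ≤ (A.card + B.card + C.card) ^ 2 := by
  obtain ⟨p, hp⟩ : ∃ p, A.card = p := ⟨_, rfl⟩
  obtain ⟨q, hq⟩ : ∃ q, B.card = q := ⟨_, rfl⟩
  obtain ⟨r, hr⟩ : ∃ r, C.card = r := ⟨_, rfl⟩
  have even_bound := fun u v t => layeredCount_le_of_card_eq_add A u v t B C
  have odd_bound := fun u v t => layeredCount_le_of_card_eq_add_add_one A u v t B C
  rw [hp, hq, hr] at *
  zify at even_bound odd_bound ⊢
  rcases le_total (q + r) p with h₁ | h₁
  · have := even_bound q r 0 (by simp) (by simp)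
    zify at h₁
    push_cast at this
    nlinarith [sq_nonneg ((q : ℤ) - r), mul_self_le_mul_self (by positivity) h₁]
  rcases le_or_gt (p + q) r with h₂ | h₂
  · have := even_bound 0 (r - q) q (by simp) (by omega)
    zify at h₂
    push_cast at this
    nlinarith [sq_nonneg ((q : ℤ) - p), mul_self_le_mul_self (by positivity) h₂]
  rcases le_or_gt (p + r) q with h₃ | h₃
  · have := even_bound (q - r) 0 r (by omega) (by simp)
    zify at h₃
    push_cast at this
    nlinarith [sq_nonneg ((r : ℤ) - p), mul_self_le_mul_self (by positivity) h₃]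
  rcases Nat.even_or_odd' (q + r - p) with ⟨t, ht | ht⟩
  · obtain ⟨u, rfl⟩ : ∃ u, q = u + t := ⟨q - t, by omega⟩
    obtain ⟨v, rfl⟩ : ∃ v, r = v + t := ⟨r - t, by omega⟩
    obtain rfl : p = u + v := by omega
    have := even_bound u v t (by simp) (by simp)
    push_cast at this ⊢
    nlinarith [sq_nonneg ((u : ℤ) - v), sq_nonneg ((u : ℤ) - t), sq_nonneg ((v : ℤ) - t)]
  · obtain ⟨u, rfl⟩ : ∃ u, q = u + t + 1 := ⟨q - t - 1, by omega⟩
    obtain ⟨v, rfl⟩ : ∃ v, r = v + t + 1 := ⟨r - t - 1, by omega⟩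
    obtain rfl : p = u + v + 1 := by omega
    have := odd_bound u v t (by simp) (by simp)
    push_cast at this ⊢
    nlinarith [sq_nonneg ((u : ℤ) - v), sq_nonneg ((u : ℤ) - t), sq_nonneg ((v : ℤ) - t)]

end Sumset

section HexGrid

/-- The neighbor of `v` along its vertical edge. -/
def verticalNbr (v : ℤ × ℤ) : ℤ × ℤ :=
  if (v.1 + v.2) % 2 = 0 then (v.1, v.2 + 1) else (v.1, v.2 - 1)

lemma hexAdj_iff (v w : ℤ × ℤ) :
    hexAdj v w ↔ w = (v.1 + 1, v.2) ∨ w = (v.1 - 1, v.2) ∨ w = verticalNbr v := by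
  obtain ⟨x, y⟩ := v
  obtain ⟨x', y'⟩ := w
  unfold hexAdj verticalNbr
  simp only [Int.even_iff]
  split_ifs with h <;> simp only [Prod.mk.injEq] at h ⊢ <;> omega

/-- The vertices of `W` mapped outside of `W` by `f`. -/
def exits (W : Finset (ℤ × ℤ)) (f : ℤ × ℤ → ℤ × ℤ) : Finset (ℤ × ℤ) :=
  W.filter fun v => f v ∉ W

/-- If `f` moves along the fibers of `ind` and strictly increases `par`, then every fiber meeting
`W` contains a vertex at which `f` leaves `W`. -/
lemma card_image_le_card_exits (W : Finset (ℤ × ℤ)) (ind par : ℤ × ℤ → ℤ) (f : ℤ × ℤ → ℤ × ℤ)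
    (hind : ∀ v, ind (f v) = ind v) (hpar : ∀ v, par v < par (f v)) :
    (W.image ind).card ≤ (exits W f).card := by
  refine (Finset.card_le_card fun k hk => ?_).trans
    (Finset.card_image_le (s := exits W f) (f := ind))
  obtain ⟨w, hw, rfl⟩ := Finset.mem_image.1 hk
  obtain ⟨v, hv, hmax⟩ := (W.filter fun v => ind v = ind w).exists_max_image par
    ⟨w, Finset.mem_filter.2 ⟨hw, rfl⟩⟩
  rw [Finset.mem_filter] at hv
  refine Finset.mem_image.2 ⟨v, Finset.mem_filter.2 ⟨hv.1, fun hf => ?_⟩, hv.2⟩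
  exact (hpar v).not_ge (hmax _ (Finset.mem_filter.2 ⟨hf, (hind v).trans hv.2⟩))

lemma ncard_hexCutEdges (W : Finset (ℤ × ℤ)) :
    (hexCutEdges (W : Set (ℤ × ℤ))).ncard = (exits W fun v => (v.1 + 1, v.2)).card +
      (exits W fun v => (v.1 - 1, v.2)).card + (exits W verticalNbr).card := by
  classical
  have hcard : ∀ f : ℤ × ℤ → ℤ × ℤ,
      ((exits W f).image fun v => (v, f v)).card = (exits W f).card := fun f =>
    Finset.card_image_of_injective _ fun _ _ h => congrArg Prod.fst h
  have hdisj : ∀ f g : ℤ × ℤ → ℤ × ℤ, (∀ v, f v ≠ g v) →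
      Disjoint ((exits W f).image fun v => (v, f v)) ((exits W g).image fun v => (v, g v)) := by
    intro f g hfg
    rw [Finset.disjoint_left]
    intro z hz hz'
    obtain ⟨v, -, rfl⟩ := Finset.mem_image.1 hz
    obtain ⟨w, -, hw⟩ := Finset.mem_image.1 hz'
    obtain ⟨rfl, h⟩ := Prod.mk.inj hw
    exact hfg _ h.symm
  have heq : hexCutEdges (W : Set (ℤ × ℤ)) =
      ↑(((exits W fun v => (v.1 + 1, v.2)).image fun v => (v, (v.1 + 1, v.2))) ∪
        ((exits W fun v => (v.1 - 1, v.2)).image fun v => (v, (v.1 - 1, v.2))) ∪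
        ((exits W verticalNbr).image fun v => (v, verticalNbr v))) := by
    ext ⟨v, w⟩
    simp only [hexCutEdges, hexAdj_iff, exits, Set.mem_ofPred_eq, Finset.mem_coe, Finset.mem_union,
      Finset.mem_image, Finset.mem_filter, Prod.mk.injEq]
    constructor
    · rintro ⟨hv, hw, rfl | rfl | rfl⟩
      · exact Or.inl (Or.inl ⟨v, ⟨hv, hw⟩, rfl, rfl⟩)
      · exact Or.inl (Or.inr ⟨v, ⟨hv, hw⟩, rfl, rfl⟩)
      · exact Or.inr ⟨v, ⟨hv, hw⟩, rfl, rfl⟩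
    · rintro ((⟨v, ⟨hv, hw⟩, rfl, rfl⟩ | ⟨v, ⟨hv, hw⟩, rfl, rfl⟩) | ⟨v, ⟨hv, hw⟩, rfl, rfl⟩)
      · exact ⟨hv, hw, Or.inl rfl⟩
      · exact ⟨hv, hw, Or.inr (Or.inl rfl)⟩
      · exact ⟨hv, hw, Or.inr (Or.inr rfl)⟩
  rw [heq, Set.ncard_coe_finset, Finset.card_union_of_disjoint, Finset.card_union_of_disjoint,
    hcard, hcard, hcard]
  · refine hdisj _ _ fun v h => ?_
    have := congrArg Prod.fst h
    simp only at this
    omega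
  · refine Finset.disjoint_union_left.2 ⟨hdisj _ _ fun v h => ?_, hdisj _ _ fun v h => ?_⟩ <;>
    · have := congrArg Prod.fst h
      unfold verticalNbr at this
      split_ifs at this <;> simp only at this <;> omega

/-- The function equal to `f` at the vertices with even coordinate sum and to `g` elsewhere. -/
def byParity (f g : ℤ × ℤ → ℤ × ℤ) (v : ℤ × ℤ) : ℤ × ℤ :=
  if (v.1 + v.2) % 2 = 0 then f v else g v

lemma card_exits_byParity_add (W : Finset (ℤ × ℤ)) (f g : ℤ × ℤ → ℤ × ℤ) :
    (exits W (byParity f g)).card + (exits W (byParity g f)).card =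
      (exits W f).card + (exits W g).card := by
  simp only [exits, Finset.card_filter, ← Finset.sum_add_distrib]
  refine Finset.sum_congr rfl fun v _ => ?_
  unfold byParity
  split_ifs <;> rfl

lemma card_image_add_le_ncard_hexCutEdges (W : Finset (ℤ × ℤ)) :
    (W.image fun v => v.2).card + (W.image fun v => (v.2 - v.1) / 2).card +
      (W.image fun v => (v.1 + v.2) / 2).card ≤ (hexCutEdges (W : Set (ℤ × ℤ))).ncard := by
  rw [ncard_hexCutEdges]
  set right : ℤ × ℤ → ℤ × ℤ := fun v => (v.1 + 1, v.2)
  set left : ℤ × ℤ → ℤ × ℤ := fun v => (v.1 - 1, v.2)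
  have h₁ := card_image_le_card_exits W (fun v => v.2) (fun v => v.1) right
    (fun v => rfl) (fun v => by simp [right])
  have h₂ := card_image_le_card_exits W (fun v => v.2) (fun v => -v.1) left
    (fun v => rfl) (fun v => by simp [left])
  have h₃ := card_image_le_card_exits W (fun v => (v.2 - v.1) / 2) (fun v => v.1 + v.2)
    (byParity verticalNbr right)
    (fun v => by unfold byParity verticalNbr; split_ifs <;> simp only [right] <;> omega)
    (fun v => by unfold byParity verticalNbr; split_ifs <;> simp only [right] <;> omega)
  have h₄ := card_image_le_card_exits W (fun v => (v.2 - v.1) / 2) (fun v => -(v.1 + v.2))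
    (byParity left verticalNbr)
    (fun v => by unfold byParity verticalNbr; split_ifs <;> simp only [left] <;> omega)
    (fun v => by unfold byParity verticalNbr; split_ifs <;> simp only [left] <;> omega)
  have h₅ := card_image_le_card_exits W (fun v => (v.1 + v.2) / 2) (fun v => v.1 - v.2)
    (byParity right verticalNbr)
    (fun v => by unfold byParity verticalNbr; split_ifs <;> simp only [right] <;> omega)
    (fun v => by unfold byParity verticalNbr; split_ifs <;> simp only [right] <;> omega)
  have h₆ := card_image_le_card_exits W (fun v => (v.1 + v.2) / 2) (fun v => -(v.1 - v.2))
    (byParity verticalNbr left)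
    (fun v => by unfold byParity verticalNbr; split_ifs <;> simp only [left] <;> omega)
    (fun v => by unfold byParity verticalNbr; split_ifs <;> simp only [left] <;> omega)
  have h₇ := card_exits_byParity_add W verticalNbr right
  have h₈ := card_exits_byParity_add W verticalNbr left
  omega

lemma card_le_layeredCount (W : Finset (ℤ × ℤ)) :
    W.card ≤ layeredCount (W.image fun v => v.2) (W.image fun v => (v.2 - v.1) / 2)
      (W.image fun v => (v.1 + v.2) / 2) := by
  rw [← Finset.card_filter_add_card_filter_not (s := W) (fun v => (v.1 + v.2) % 2 = 0)]
  refine add_le_add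
    (Finset.card_le_card_of_injOn (fun v => ((v.2 - v.1) / 2, (v.1 + v.2) / 2)) ?_ ?_)
    (Finset.card_le_card_of_injOn (fun v => ((v.2 - v.1) / 2, (v.1 + v.2) / 2)) ?_ ?_)
  · intro v hv
    obtain ⟨hv, h⟩ := Finset.mem_filter.1 (Finset.mem_coe.1 hv)
    refine Finset.mem_coe.2 (Finset.mem_filter.2 ⟨Finset.mk_mem_product
      (Finset.mem_image_of_mem _ hv) (Finset.mem_image_of_mem _ hv), ?_⟩)
    exact Finset.mem_image.2 ⟨v, hv, by simp only; omega⟩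
  · intro v hv w hw heq
    have h := (Finset.mem_filter.1 (Finset.mem_coe.1 hv)).2
    have h' := (Finset.mem_filter.1 (Finset.mem_coe.1 hw)).2
    rw [Prod.mk.injEq] at heq
    exact Prod.ext (by omega) (by omega)
  · intro v hv
    obtain ⟨hv, h⟩ := Finset.mem_filter.1 (Finset.mem_coe.1 hv)
    refine Finset.mem_coe.2 (Finset.mem_filter.2 ⟨Finset.mk_mem_product
      (Finset.mem_image_of_mem _ hv) (Finset.mem_image_of_mem _ hv), ?_⟩)
    exact Finset.mem_image.2 ⟨v.2, Finset.mem_image_of_mem _ hv, by simp only; omega⟩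
  · intro v hv w hw heq
    have h := (Finset.mem_filter.1 (Finset.mem_coe.1 hv)).2
    have h' := (Finset.mem_filter.1 (Finset.mem_coe.1 hw)).2
    rw [Prod.mk.injEq] at heq
    exact Prod.ext (by omega) (by omega)

end HexGrid

/-- For every finite subset `W` of the vertices of the infinite hexagonal grid,
`|ℰ(W)| ≥ √6 · √|W|`. -/
theorem infinite_hex_edge_isoperimetric (W : Set (ℤ × ℤ)) (hW : W.Finite) :
    Real.sqrt 6 * Real.sqrt W.ncard ≤ ((hexCutEdges W).ncard : ℝ) := by
  lift W to Finset (ℤ × ℤ) using hW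
  rw [Set.ncard_coe_finset, ← Real.sqrt_mul (by norm_num)]
  refine Real.sqrt_le_iff.2 ⟨by positivity, ?_⟩
  have h : 6 * W.card ≤ (hexCutEdges (W : Set (ℤ × ℤ))).ncard ^ 2 :=
    calc 6 * W.card ≤ _ := Nat.mul_le_mul_left 6 (card_le_layeredCount W)
      _ ≤ _ := six_mul_layeredCount_le _ _ _
      _ ≤ _ := Nat.pow_le_pow_left (card_image_add_le_ncard_hexCutEdges W) 2
  exact_mod_cast h
end

section
/- The constant √6 is optimal in the edge-isoperimetric inequality on the infinite hexagonal grid: if c is a real number such that |ℰ(W)| ≥ c · √|W| holds for every finite nonempty subset W of the vertices of G∞, then c ≤ √6. -/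
/-- Exactly one edge leaves the cell `C(0,0)` at each of its six vertices, so at most six
edges leave it in total. -/
theorem ncard_hexCutEdges_hexCell_zero_le : (hexCutEdges (hexCell 0 0)).ncard ≤ 6 := by
  have hsub : hexCutEdges (hexCell 0 0) ⊆
      (({((0, 0), (-1, 0)), ((1, 0), (1, -1)), ((2, 0), (3, 0)),
        ((0, 1), (-1, 1)), ((1, 1), (1, 2)), ((2, 1), (3, 1))} :
          Finset ((ℤ × ℤ) × (ℤ × ℤ))) : Set ((ℤ × ℤ) × (ℤ × ℤ))) := by
    rintro ⟨⟨a, b⟩, ⟨x, y⟩⟩ ⟨hv, hw, hadj⟩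
    simp only [hexCell, hexAdj, Set.mem_insert_iff, Set.mem_singleton_iff, Prod.mk.injEq,
      Int.even_iff, Finset.coe_insert, Finset.coe_singleton] at hv hw hadj ⊢
    rcases hadj with hadj | hadj <;>
      rcases hv with ⟨rfl, rfl⟩ | ⟨rfl, rfl⟩ | ⟨rfl, rfl⟩ | ⟨rfl, rfl⟩ | ⟨rfl, rfl⟩ | ⟨rfl, rfl⟩ <;>
      simp at hw hadj ⊢ <;> omega
  exact (Set.ncard_le_ncard hsub (Finset.finite_toSet _)).trans
    ((Set.ncard_coe_finset _).trans_le Finset.card_le_six)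

/-- The constant `√6` is optimal in the edge-isoperimetric inequality on the
infinite hexagonal grid. -/
theorem infinite_hex_edge_constant_optimal (c : ℝ)
    (h : ∀ W : Set (ℤ × ℤ), W.Finite → W.Nonempty →
      c * Real.sqrt W.ncard ≤ ((hexCutEdges W).ncard : ℝ)) :
    c ≤ Real.sqrt 6 := by
  have hfin : (hexCell 0 0).Finite := Set.finite_of_ncard_ne_zero (by simp [ncard_hexCell_zero])
  have hne : (hexCell 0 0).Nonempty := ⟨(0, 0), by simp [hexCell]⟩
  have hc := h _ hfin hne
  have hcut : ((hexCutEdges (hexCell 0 0)).ncard : ℝ) ≤ 6 := by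
    exact_mod_cast ncard_hexCutEdges_hexCell_zero_le
  rw [ncard_hexCell_zero] at hc
  push_cast at hc
  have hpos : 0 < Real.sqrt 6 := by positivity
  refine le_of_mul_le_mul_right ?_ hpos
  rw [Real.mul_self_sqrt (by norm_num)]
  exact hc.trans hcut
end

section
/- For every finite subset W of the vertices of the infinite hexagonal grid G∞, the number of boundary vertices satisfies |ℬ(W)| ≥ √6 · √(|W| + 3/2) − 3 (this is the inequality |ℬ(W)| ≥ c·√(|W| + c²/4) − c²/2 with c = √6). -/
namespace HexIsoperimetry

open Finset

/-- The triples `(p, q, y) ∈ P × Q × Y` with `y - p - q ∈ {0, 1}`; these are the row coordinates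
of the vertices of the hexagonal grid lying on prescribed rows. -/
def rowTriples (P Q Y : Finset ℤ) : Finset (ℤ × ℤ × ℤ) :=
  (P ×ˢ Q ×ˢ Y).filter fun z => z.2.2 = z.1 + z.2.1 ∨ z.2.2 = z.1 + z.2.1 + 1

theorem mem_rowTriples {P Q Y : Finset ℤ} {p q y : ℤ} :
    (p, q, y) ∈ rowTriples P Q Y ↔
      (p ∈ P ∧ q ∈ Q ∧ y ∈ Y) ∧ (y = p + q ∨ y = p + q + 1) := by
  simp [rowTriples]

theorem card_pair_zero_one : #({0, 1} : Finset ℤ) = 2 := rfl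

theorem card_rowTriples_le_left (P Q Y : Finset ℤ) : #(rowTriples P Q Y) ≤ 2 * (#P * #Q) := by
  have h : #(rowTriples P Q Y) ≤ #((P ×ˢ Q) ×ˢ ({0, 1} : Finset ℤ)) := by
    refine card_le_card_of_injOn (fun z => ((z.1, z.2.1), z.2.2 - z.1 - z.2.1)) ?_ ?_
    · rintro ⟨p, q, y⟩ hz
      have hz := mem_rowTriples.1 hz
      simp only [coe_product, Set.mem_prod, mem_coe, mem_insert, mem_singleton]
      exact ⟨⟨hz.1.1, hz.1.2.1⟩, by lia⟩
    · rintro ⟨p, q, y⟩ _ ⟨p', q', y'⟩ _ h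
      simp only [Prod.mk.injEq] at h ⊢
      lia
  rw [card_product, card_product, card_pair_zero_one] at h
  lia

theorem card_rowTriples_le_middle (P Q Y : Finset ℤ) :
    #(rowTriples P Q Y) ≤ 2 * (#Q * #Y) := by
  have h : #(rowTriples P Q Y) ≤ #((Q ×ˢ Y) ×ˢ ({0, 1} : Finset ℤ)) := by
    refine card_le_card_of_injOn (fun z => ((z.2.1, z.2.2), z.2.2 - z.1 - z.2.1)) ?_ ?_
    · rintro ⟨p, q, y⟩ hz
      have hz := mem_rowTriples.1 hz
      simp only [coe_product, Set.mem_prod, mem_coe, mem_insert, mem_singleton]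
      exact ⟨⟨hz.1.2.1, hz.1.2.2⟩, by lia⟩
    · rintro ⟨p, q, y⟩ _ ⟨p', q', y'⟩ _ h
      simp only [Prod.mk.injEq] at h ⊢
      lia
  rw [card_product, card_product, card_pair_zero_one] at h
  lia

theorem card_rowTriples_le_right (P Q Y : Finset ℤ) :
    #(rowTriples P Q Y) ≤ 2 * (#P * #Y) := by
  have h : #(rowTriples P Q Y) ≤ #((P ×ˢ Y) ×ˢ ({0, 1} : Finset ℤ)) := by
    refine card_le_card_of_injOn (fun z => ((z.1, z.2.2), z.2.2 - z.1 - z.2.1)) ?_ ?_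
    · rintro ⟨p, q, y⟩ hz
      have hz := mem_rowTriples.1 hz
      simp only [coe_product, Set.mem_prod, mem_coe, mem_insert, mem_singleton]
      exact ⟨⟨hz.1.1, hz.1.2.2⟩, by lia⟩
    · rintro ⟨p, q, y⟩ _ ⟨p', q', y'⟩ _ h
      simp only [Prod.mk.injEq] at h ⊢
      lia
  rw [card_product, card_product, card_pair_zero_one] at h
  lia

/-- The triples with `p` minimal in `P` or `q` maximal in `Q`. -/
def hookTriples (P Q Y : Finset ℤ) (p₀ q₀ : ℤ) : Finset (ℤ × ℤ × ℤ) :=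
  (rowTriples P Q Y).filter fun z => z.1 = p₀ ∨ z.2.1 = q₀

theorem mem_hookTriples {P Q Y : Finset ℤ} {p₀ q₀ p q y : ℤ} :
    (p, q, y) ∈ hookTriples P Q Y p₀ q₀ ↔
      ((p ∈ P ∧ q ∈ Q ∧ y ∈ Y) ∧ (y = p + q ∨ y = p + q + 1)) ∧ (p = p₀ ∨ q = q₀) := by
  simp [hookTriples, mem_rowTriples]

theorem card_rowTriples_le_erase_add_hook (P Q Y : Finset ℤ) (p₀ q₀ : ℤ) :
    #(rowTriples P Q Y) ≤
      #(rowTriples (P.erase p₀) (Q.erase q₀) Y) + #(hookTriples P Q Y p₀ q₀) := by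
  refine (card_le_card ?_).trans (card_union_le _ _)
  rintro ⟨p, q, y⟩ hz
  rw [mem_union, mem_hookTriples]
  rw [mem_rowTriples] at hz ⊢
  simp only [mem_erase]
  tauto

section Hook

variable {P Q Y : Finset ℤ} {p₀ q₀ : ℤ}

theorem hookTriples_mapsTo :
    Set.MapsTo (fun z : ℤ × ℤ × ℤ => (z.2.2, z.2.2 - z.1 - z.2.1))
      (hookTriples P Q Y p₀ q₀ : Set (ℤ × ℤ × ℤ))
      ((Y ×ˢ ({0, 1} : Finset ℤ) : Finset (ℤ × ℤ)) : Set (ℤ × ℤ)) := by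
  rintro ⟨p, q, y⟩ hz
  have hz := mem_hookTriples.1 hz
  simp only [coe_product, Set.mem_prod, mem_coe, mem_insert, mem_singleton]
  exact ⟨hz.1.1.2.2, by lia⟩

/-- The sums `p + q` are strictly increasing along a hook. -/
theorem hookTriples_injOn (hp : ∀ p ∈ P, p₀ ≤ p) (hq : ∀ q ∈ Q, q ≤ q₀) :
    Set.InjOn (fun z : ℤ × ℤ × ℤ => (z.2.2, z.2.2 - z.1 - z.2.1))
      (hookTriples P Q Y p₀ q₀ : Set (ℤ × ℤ × ℤ)) := by
  rintro ⟨p, q, y⟩ hz ⟨p', q', y'⟩ hz' h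
  have hz := mem_hookTriples.1 hz
  have hz' := mem_hookTriples.1 hz'
  have h₁ := hp _ hz.1.1.1
  have h₂ := hp _ hz'.1.1.1
  have h₃ := hq _ hz.1.1.2.1
  have h₄ := hq _ hz'.1.1.2.1
  simp only [Prod.mk.injEq] at h ⊢
  lia

theorem card_hookTriples_le (hp : ∀ p ∈ P, p₀ ≤ p) (hq : ∀ q ∈ Q, q ≤ q₀) :
    #(hookTriples P Q Y p₀ q₀) ≤ 2 * #Y := by
  have h := card_le_card_of_injOn _ hookTriples_mapsTo
    (hookTriples_injOn (Y := Y) hp hq)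
  rw [card_product, card_pair_zero_one] at h
  lia

theorem card_hookTriples_lt (hp : ∀ p ∈ P, p₀ ≤ p) (hq : ∀ q ∈ Q, q ≤ q₀) (hq₀ : q₀ ∈ Q)
    (hY : Y.Nonempty) (hcard : #P + #Q ≤ #Y + 1) :
    #(hookTriples P Q Y p₀ q₀) < 2 * #Y := by
  refine (card_hookTriples_le hp hq).lt_of_ne fun heq => ?_
  have hsurj : Set.SurjOn (fun z : ℤ × ℤ × ℤ => (z.2.2, z.2.2 - z.1 - z.2.1))
      (hookTriples P Q Y p₀ q₀ : Set (ℤ × ℤ × ℤ))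
      ((Y ×ˢ ({0, 1} : Finset ℤ) : Finset (ℤ × ℤ)) : Set (ℤ × ℤ)) := by
    refine surjOn_of_injOn_of_card_le _ hookTriples_mapsTo (hookTriples_injOn hp hq) ?_
    rw [card_product, card_pair_zero_one]
    lia
  have hsub : insert (Y.min' hY - 1) Y ⊆ P.image (· + q₀) ∪ (Q.erase q₀).image (p₀ + ·) := by
    have key : ∀ s, (∃ y ∈ Y, y - s = 0 ∨ y - s = 1) →
        s ∈ P.image (· + q₀) ∪ (Q.erase q₀).image (p₀ + ·) := by
      rintro s ⟨y, hy, hs⟩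
      obtain ⟨⟨p, q, y'⟩, hz, h⟩ := hsurj (show (y, y - s) ∈ _ by simpa [hy] using hs)
      have hz := mem_hookTriples.1 hz
      simp only [Prod.mk.injEq] at h
      simp only [mem_union, mem_image, mem_erase]
      by_cases hqq : q = q₀
      · exact Or.inl ⟨p, hz.1.1.1, by lia⟩
      · exact Or.inr ⟨q, ⟨hqq, hz.1.1.2.1⟩, by lia⟩
    intro s hs
    rcases mem_insert.1 hs with rfl | hs
    · exact key _ ⟨_, Y.min'_mem hY, Or.inr (by lia)⟩
    · exact key _ ⟨s, hs, Or.inl (by lia)⟩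
  have hnot : Y.min' hY - 1 ∉ Y := fun h => by
    have := Y.min'_le _ h
    lia
  have h₁ := (card_le_card hsub).trans (card_union_le _ _)
  have h₂ : #(P.image (· + q₀)) ≤ #P := card_image_le
  have h₃ : #((Q.erase q₀).image (p₀ + ·)) ≤ #(Q.erase q₀) := card_image_le
  have h₄ := card_erase_add_one hq₀
  rw [card_insert_of_notMem hnot] at h₁
  lia

end Hook

theorem card_rowTriples_le_of_hooks (Y : Finset ℤ) (t : ℕ) :
    ∀ (k l : ℕ) (P Q : Finset ℤ), #P = k + t → #Q = l + t →
      ∃ P' Q', #P' = k ∧ #Q' = l ∧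
        #(rowTriples P Q Y) ≤ 2 * (#Y * t) + #(rowTriples P' Q' Y) := by
  induction t with
  | zero => exact fun k l P Q hP hQ => ⟨P, Q, hP, hQ, by simp⟩
  | succ t ih =>
    intro k l P Q hP hQ
    have hP' : P.Nonempty := card_pos.1 (by lia)
    have hQ' : Q.Nonempty := card_pos.1 (by lia)
    obtain ⟨P', Q', h₁, h₂, h₃⟩ := ih k l (P.erase (P.min' hP')) (Q.erase (Q.max' hQ'))
      (by rw [card_erase_of_mem (P.min'_mem hP')]; lia)
      (by rw [card_erase_of_mem (Q.max'_mem hQ')]; lia)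
    refine ⟨P', Q', h₁, h₂, ?_⟩
    have h₄ := card_rowTriples_le_erase_add_hook P Q Y (P.min' hP') (Q.max' hQ')
    have h₅ := card_hookTriples_le (P := P) (Q := Q) (Y := Y)
      (p₀ := P.min' hP') (q₀ := Q.max' hQ')
      (fun p hp => P.min'_le p hp) (fun q hq => Q.le_max' q hq)
    rw [mul_add]
    lia

theorem card_rowTriples_le_hooks_add_rect (P Q Y : Finset ℤ) (t k l : ℕ)
    (hP : #P = k + t) (hQ : #Q = l + t) :
    #(rowTriples P Q Y) ≤ 2 * (#Y * t) + 2 * (k * l) := by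
  obtain ⟨P', Q', rfl, rfl, h⟩ := card_rowTriples_le_of_hooks Y t k l P Q hP hQ
  exact h.trans (by gcongr; exact card_rowTriples_le_left _ _ _)

theorem card_rowTriples_le_of_card_eq_odd (P Q Y : Finset ℤ) (t : ℕ)
    (hP : #P = 2 * t + 1) (hQ : #Q = 2 * t + 1) (hY : #Y = 2 * t + 1) :
    #(rowTriples P Q Y) + 1 ≤ 2 * (#Y * (t + 1)) + 2 * (t * t) := by
  obtain ⟨P', Q', hP', hQ', h⟩ := card_rowTriples_le_of_hooks Y t (t + 1) (t + 1) P Q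
    (by lia) (by lia)
  have neP : P'.Nonempty := card_pos.1 (by lia)
  have neQ : Q'.Nonempty := card_pos.1 (by lia)
  have h₁ := card_rowTriples_le_erase_add_hook P' Q' Y (P'.min' neP) (Q'.max' neQ)
  have h₂ := card_hookTriples_lt (P := P') (Q := Q') (Y := Y)
    (p₀ := P'.min' neP) (q₀ := Q'.max' neQ)
    (fun p hp => P'.min'_le p hp) (fun q hq => Q'.le_max' q hq)
    (Q'.max'_mem neQ) (card_pos.1 (by lia)) (by lia)
  have h₃ := card_rowTriples_le_left (P'.erase (P'.min' neP)) (Q'.erase (Q'.max' neQ)) Y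
  rw [card_erase_of_mem (P'.min'_mem neP), card_erase_of_mem (Q'.max'_mem neQ), hP', hQ',
    Nat.add_sub_cancel] at h₃
  rw [mul_add]
  lia

theorem six_mul_card_rowTriples_le (P Q Y : Finset ℤ) :
    6 * #(rowTriples P Q Y) ≤ (#P + #Q + #Y) ^ 2 := by
  have hab := card_rowTriples_le_left P Q Y
  have hbc := card_rowTriples_le_middle P Q Y
  have hac := card_rowTriples_le_right P Q Y
  have hooks := card_rowTriples_le_hooks_add_rect P Q Y
  have hodd := card_rowTriples_le_of_card_eq_odd P Q Y
  generalize #(rowTriples P Q Y) = n at *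
  generalize #P = a at *
  generalize #Q = b at *
  generalize #Y = c at *
  by_cases h₁ : a + b ≤ c
  · nlinarith [sq_nonneg ((a : ℤ) - b), mul_le_mul h₁ h₁ (by lia) (by lia)]
  by_cases h₂ : b + c ≤ a
  · nlinarith [sq_nonneg ((b : ℤ) - c), mul_le_mul h₂ h₂ (by lia) (by lia)]
  by_cases h₃ : a + c ≤ b
  · nlinarith [sq_nonneg ((a : ℤ) - c), mul_le_mul h₃ h₃ (by lia) (by lia)]
  obtain ⟨t, ht | ht⟩ : ∃ t, a + b = c + 2 * t ∨ a + b = c + 2 * t + 1 :=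
    ⟨(a + b - c) / 2, by lia⟩
  · obtain ⟨k, rfl⟩ : ∃ k, a = k + t := ⟨a - t, by lia⟩
    obtain ⟨l, rfl⟩ : ∃ l, b = l + t := ⟨b - t, by lia⟩
    have h := hooks t k l rfl rfl
    obtain rfl : c = k + l := by lia
    zify at h ⊢
    nlinarith [sq_nonneg ((k : ℤ) + l - 2 * t), sq_nonneg ((k : ℤ) - l)]
  · obtain ⟨k, rfl⟩ : ∃ k, a = k + t := ⟨a - t, by lia⟩
    obtain ⟨l, rfl⟩ : ∃ l, b = l + t := ⟨b - t, by lia⟩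
    have h := hooks t k l rfl rfl
    have hc : (c : ℤ) = k + l - 1 := by lia
    by_cases hkl : k = l
    · subst hkl
      by_cases hkt : k = t + 1
      · subst hkt
        have h' := hodd t (by lia) (by lia) (by lia)
        zify at h' ⊢
        rw [hc] at h' ⊢
        push_cast at h' ⊢
        nlinarith
      · have hsq : 1 ≤ ((k : ℤ) - t - 1) ^ 2 := by
          have : (k : ℤ) - t - 1 ≠ 0 := by lia
          have := sq_pos_of_ne_zero this
          lia
        zify at h ⊢
        rw [hc] at h ⊢
        nlinarith
    · have hsq : 1 ≤ ((k : ℤ) - l) ^ 2 := by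
        have : (k : ℤ) - l ≠ 0 := by lia
        have := sq_pos_of_ne_zero this
        lia
      zify at h ⊢
      rw [hc] at h ⊢
      nlinarith [sq_nonneg ((k : ℤ) + l - 2 * t - 2)]

/-- If `succ` advances the parameter `π` by one along the fibres of `ρ`, then each fibre of `ρ`
meeting `I` contains a point of `B` just past the last point of `I`. -/
theorem card_image_le_card_exits {V : Type*} [DecidableEq V] (I B : Finset V) (ρ π : V → ℤ)
    (succ pred : V → V) (hρ : ∀ v, ρ (succ v) = ρ v) (hπ : ∀ v, π (succ v) = π v + 1)
    (hpred : ∀ v, pred (succ v) = v) (hB : ∀ v ∈ I, succ v ∉ I → succ v ∈ B) :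
    #(I.image ρ) ≤ #(B.filter fun v => pred v ∈ I ∧ succ v ∉ I) := by
  refine (card_le_card ?_).trans (card_image_le (f := ρ))
  intro r hr
  obtain ⟨v, hv, rfl⟩ := mem_image.1 hr
  obtain ⟨w, hw, hmax⟩ := exists_max_image (I.filter fun w => ρ w = ρ v) π
    ⟨v, mem_filter.2 ⟨hv, rfl⟩⟩
  rw [mem_filter] at hw
  have hfar : ∀ u, ρ u = ρ v → π w < π u → u ∉ I := fun u hu hlt huI =>
    (hmax u (mem_filter.2 ⟨huI, hu⟩)).not_gt hlt
  have h₁ : succ w ∉ I := hfar _ (by rw [hρ, hw.2]) (by rw [hπ]; lia)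
  refine mem_image.2 ⟨succ w, mem_filter.2 ⟨hB w hw.1 h₁, ?_, ?_⟩, by rw [hρ, hw.2]⟩
  · rw [hpred]
    exact hw.1
  · exact hfar _ (by rw [hρ, hρ, hw.2]) (by rw [hπ, hπ]; lia)

/-- The next vertex along the row of direction `0`, `1` or `2`. -/
def rowSucc (i : Fin 3) (v : ℤ × ℤ) : ℤ × ℤ :=
  match i with
  | 0 => (v.1 + 1, v.2)
  | 1 => if (v.1 + v.2) % 2 = 0 then (v.1, v.2 + 1) else (v.1 + 1, v.2)
  | 2 => if (v.1 + v.2) % 2 = 0 then (v.1 + 1, v.2) else (v.1, v.2 - 1)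

/-- The previous vertex along the row of direction `0`, `1` or `2`. -/
def rowPred (i : Fin 3) (v : ℤ × ℤ) : ℤ × ℤ :=
  match i with
  | 0 => (v.1 - 1, v.2)
  | 1 => if (v.1 + v.2) % 2 = 0 then (v.1 - 1, v.2) else (v.1, v.2 - 1)
  | 2 => if (v.1 + v.2) % 2 = 0 then (v.1, v.2 + 1) else (v.1 - 1, v.2)

theorem rowInd_one (v : ℤ × ℤ) : rowInd 1 v = (v.2 - v.1) / 2 :=
  Int.fdiv_eq_ediv_of_nonneg _ (by norm_num)

theorem rowInd_two (v : ℤ × ℤ) : rowInd 2 v = (v.1 + v.2) / 2 :=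
  Int.fdiv_eq_ediv_of_nonneg _ (by norm_num)

theorem rowInd_rowSucc (i : Fin 3) (v : ℤ × ℤ) : rowInd i (rowSucc i v) = rowInd i v := by
  fin_cases i
  · rfl
  · change rowInd 1 (rowSucc 1 v) = rowInd 1 v
    rw [rowInd_one, rowInd_one]
    dsimp only [rowSucc]
    split_ifs <;> dsimp only <;> lia
  · change rowInd 2 (rowSucc 2 v) = rowInd 2 v
    rw [rowInd_two, rowInd_two]
    dsimp only [rowSucc]
    split_ifs <;> dsimp only <;> lia

theorem rowParam_rowSucc (i : Fin 3) (v : ℤ × ℤ) :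
    rowParam i (rowSucc i v) = rowParam i v + 1 := by
  fin_cases i <;> dsimp only [rowSucc, rowParam] <;> split_ifs <;> dsimp only <;> lia

theorem rowPred_rowSucc (i : Fin 3) (v : ℤ × ℤ) : rowPred i (rowSucc i v) = v := by
  obtain ⟨x, y⟩ := v
  fin_cases i <;> dsimp only [rowSucc, rowPred] <;> grind

theorem rowSucc_rowPred (i : Fin 3) (v : ℤ × ℤ) : rowSucc i (rowPred i v) = v := by
  obtain ⟨x, y⟩ := v
  fin_cases i <;> dsimp only [rowSucc, rowPred] <;> grind

theorem hexAdj_symm {v w : ℤ × ℤ} (h : hexAdj v w) : hexAdj w v := by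
  unfold hexAdj at *
  rw [Int.even_iff] at *
  lia

theorem hexAdj_rowSucc (i : Fin 3) (v : ℤ × ℤ) : hexAdj v (rowSucc i v) := by
  unfold hexAdj
  rw [Int.even_iff]
  fin_cases i <;> dsimp only [rowSucc] <;> grind

theorem hexAdj_rowPred (i : Fin 3) (v : ℤ × ℤ) : hexAdj v (rowPred i v) := by
  have h := hexAdj_rowSucc i (rowPred i v)
  rw [rowSucc_rowPred] at h
  exact hexAdj_symm h

theorem card_image_rowInd_le (I B : Finset (ℤ × ℤ))
    (hB : ∀ v ∈ I, ∀ w, hexAdj v w → w ∉ I → w ∈ B) (i : Fin 3) :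
    2 * #(I.image (rowInd i)) ≤
      ∑ v ∈ B, ((if rowPred i v ∈ I ∧ rowSucc i v ∉ I then 1 else 0) +
        (if rowSucc i v ∈ I ∧ rowPred i v ∉ I then 1 else 0)) := by
  rw [sum_add_distrib, ← card_filter, ← card_filter, two_mul]
  refine add_le_add ?_ ?_
  · exact card_image_le_card_exits I B (rowInd i) (rowParam i) _ _ (rowInd_rowSucc i)
      (rowParam_rowSucc i) (rowPred_rowSucc i) fun v hv => hB v hv _ (hexAdj_rowSucc i v)
  · refine card_image_le_card_exits I B (rowInd i) (fun v => -rowParam i v) _ _ ?_ ?_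
      (rowSucc_rowPred i) fun v hv => hB v hv _ (hexAdj_rowPred i v)
    · intro v
      rw [← rowInd_rowSucc, rowSucc_rowPred]
    · intro v
      have := rowParam_rowSucc i (rowPred i v)
      rw [rowSucc_rowPred] at this
      lia

/-- If `k` of the three neighbours of `v` lie in `I`, then `v` is an exit in at most
`k * (3 - k) ≤ 2` ways. -/
theorem sum_exits_le_two (I : Finset (ℤ × ℤ)) (v : ℤ × ℤ) :
    ∑ i : Fin 3, ((if rowPred i v ∈ I ∧ rowSucc i v ∉ I then 1 else 0) +
      (if rowSucc i v ∈ I ∧ rowPred i v ∉ I then 1 else 0)) ≤ 2 := by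
  simp only [Fin.sum_univ_three, rowPred, rowSucc]
  by_cases h₁ : (v.1 + 1, v.2) ∈ I <;> by_cases h₂ : (v.1 - 1, v.2) ∈ I <;>
    by_cases h : (v.1 + v.2) % 2 = 0 <;> by_cases h₃ : (v.1, v.2 + 1) ∈ I <;>
    by_cases h₄ : (v.1, v.2 - 1) ∈ I <;> simp [*]

theorem sum_card_image_rowInd_le (I B : Finset (ℤ × ℤ))
    (hB : ∀ v ∈ I, ∀ w, hexAdj v w → w ∉ I → w ∈ B) :
    ∑ i : Fin 3, #(I.image (rowInd i)) ≤ #B := by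
  have h := sum_le_sum fun i (_ : i ∈ (univ : Finset (Fin 3))) => card_image_rowInd_le I B hB i
  rw [sum_comm, ← mul_sum] at h
  have h' := h.trans (sum_le_card_nsmul B _ 2 fun v _ => sum_exits_le_two I v)
  rw [smul_eq_mul] at h'
  lia

theorem card_le_card_rowTriples (I : Finset (ℤ × ℤ)) :
    #I ≤ #(rowTriples (I.image (rowInd 1)) (I.image (rowInd 2)) (I.image (rowInd 0))) := by
  refine card_le_card_of_injOn (fun v => (rowInd 1 v, rowInd 2 v, rowInd 0 v)) ?_ ?_
  · intro v hv
    refine mem_coe.2 (mem_rowTriples.2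
      ⟨⟨mem_image_of_mem _ hv, mem_image_of_mem _ hv, mem_image_of_mem _ hv⟩, ?_⟩)
    rw [rowInd_one, rowInd_two]
    dsimp only [rowInd]
    lia
  · rintro ⟨x, y⟩ _ ⟨x', y'⟩ _ h
    simp only [rowInd_one, rowInd_two, Prod.mk.injEq] at h ⊢
    dsimp only [rowInd] at h
    lia

/-- The vertex-isoperimetric inequality of the hexagonal grid: `6 |I| ≤ |B| ^ 2` whenever `B`
contains all outer neighbours of `I`. -/
theorem six_mul_card_le_sq (I B : Finset (ℤ × ℤ))
    (hB : ∀ v ∈ I, ∀ w, hexAdj v w → w ∉ I → w ∈ B) : 6 * #I ≤ #B ^ 2 := by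
  have h₁ := card_le_card_rowTriples I
  have h₂ := six_mul_card_rowTriples_le (I.image (rowInd 1)) (I.image (rowInd 2))
    (I.image (rowInd 0))
  have h₃ := sum_card_image_rowInd_le I B hB
  rw [Fin.sum_univ_three] at h₃
  have h₄ := Nat.pow_le_pow_left h₃ 2
  ring_nf at h₂ h₄ ⊢
  lia

theorem six_mul_ncard_diff_hexBdry_le (W : Set (ℤ × ℤ)) (hW : W.Finite) :
    6 * (W \ hexBdry W).ncard ≤ (hexBdry W).ncard ^ 2 := by
  have hBfin : (hexBdry W).Finite := hW.subset fun v hv => hv.1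
  have hIfin : (W \ hexBdry W).Finite := hW.subset Set.sdiff_subset
  rw [Set.ncard_eq_toFinset_card _ hBfin, Set.ncard_eq_toFinset_card _ hIfin]
  refine six_mul_card_le_sq _ _ fun v hv w hvw hw => ?_
  rw [Set.Finite.mem_toFinset] at hv hw ⊢
  have hwW : w ∈ W := by
    by_contra hwW
    exact hv.2 ⟨hv.1, w, hwW, hvw⟩
  by_contra hwB
  exact hw ⟨hwW, hwB⟩

end HexIsoperimetry

/-- For every finite subset `W` of the vertices of the infinite hexagonal grid,
`|ℬ(W)| ≥ √6 · √(|W| + 3/2) - 3`. -/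
theorem infinite_hex_boundary_isoperimetric (W : Set (ℤ × ℤ)) (hW : W.Finite) :
    Real.sqrt 6 * Real.sqrt ((W.ncard : ℝ) + 3/2) - 3 ≤ ((hexBdry W).ncard : ℝ) := by
  have hsub : hexBdry W ⊆ W := fun v hv => hv.1
  have hcard := Set.ncard_sdiff_add_ncard_of_subset hsub hW
  have hiso := HexIsoperimetry.six_mul_ncard_diff_hexBdry_le W hW
  have hcard' : ((W \ hexBdry W).ncard : ℝ) + (hexBdry W).ncard = W.ncard := by
    exact_mod_cast hcard
  have hiso' : 6 * ((W \ hexBdry W).ncard : ℝ) ≤ ((hexBdry W).ncard : ℝ) ^ 2 := by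
    exact_mod_cast hiso
  rw [← Real.sqrt_mul (by norm_num), sub_le_iff_le_add]
  refine Real.sqrt_le_iff.2 ⟨by positivity, ?_⟩
  nlinarith
end

section
/- For every integer r ≥ 1, the set W_r = V(G_r) ∪ 𝒩(V(G_r)) ⊆ ℤ×ℤ satisfies |W_r| = 6r² + 6r and |ℬ(W_r)| = 6r; consequently |ℬ(W_r)| = √6 · √(|W_r| + 3/2) − 3, so the boundary-isoperimetric inequality on the infinite hexagonal grid is tight for these sets. -/
/-- Row-by-row description of the vertices of the finite hexagonal grid. -/
lemma mem_gridVerts_iff {r : ℕ} (hr : 1 ≤ r) (x y : ℤ) :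
    (x, y) ∈ gridVerts r ↔
      1 - (r : ℤ) ≤ y ∧ y ≤ r ∧ ((x - 1).natAbs : ℤ) + max y (1 - y) ≤ 2 * r := by
  simp only [gridVerts, hexCell, Set.mem_ofPred_eq, Set.mem_insert_iff, Set.mem_singleton_iff,
    Prod.mk.injEq]
  constructor
  · rintro ⟨a, b, hab, h⟩
    omega
  · rintro ⟨h1, h2, h3⟩
    by_cases hy : 1 ≤ y
    · by_cases hx : x ≤ 2 - 2 * r + y
      · exact ⟨1 - r, y - 1, by omega, by omega⟩
      · exact ⟨(x - y) / 2, y - 1, by omega, by omega⟩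
    · by_cases hx : x ≤ 1 - 2 * r - y + 2
      · exact ⟨1 - r - y, y, by omega, by omega⟩
      · exact ⟨(x - y - 1) / 2, y, by omega, by omega⟩

/-- Row-by-row description of the outer neighborhood of the finite hexagonal grid. -/
lemma mem_hexNbhd_gridVerts_iff {r : ℕ} (hr : 1 ≤ r) (x y : ℤ) :
    (x, y) ∈ hexNbhd (gridVerts r) ↔
      (1 - (r : ℤ) ≤ y ∧ y ≤ r ∧ ((x - 1).natAbs : ℤ) + max y (1 - y) = 2 * r + 1) ∨
      ((y = r + 1 ∨ y = -r) ∧ ((x - 1).natAbs : ℤ) ≤ r - 1 ∧ Even (x + r)) := by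
  simp only [hexNbhd, Set.mem_ofPred_eq, Prod.exists, mem_gridVerts_iff hr, hexAdj,
    Int.even_iff]
  constructor
  · rintro ⟨hv, x', y', hw, h⟩
    omega
  · rintro (h | ⟨hy | hy, h⟩)
    · refine ⟨by omega, ?_⟩
      by_cases hx : 1 ≤ x
      · exact ⟨x - 1, y, by omega, by omega⟩
      · exact ⟨x + 1, y, by omega, by omega⟩
    · exact ⟨by omega, x, y - 1, by omega, by omega⟩
    · exact ⟨by omega, x, y + 1, by omega, by omega⟩

lemma hexAdj_symm {v w : ℤ × ℤ} (h : hexAdj v w) : hexAdj w v := by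
  simp only [hexAdj, Int.even_iff] at h ⊢
  omega

/-- The boundary of a closed neighborhood lies in the open neighborhood. -/
lemma hexBdry_closedNbhd_subset (W : Set (ℤ × ℤ)) : hexBdry (W ∪ hexNbhd W) ⊆ hexNbhd W := by
  rintro v ⟨hv | hv, w, hw, hvw⟩
  · exact absurd (Or.inr ⟨fun h => hw (Or.inl h), v, hv, hexAdj_symm hvw⟩) hw
  · exact hv

/-- The boundary of the closed neighborhood of `V(G_r)` is the neighborhood of `V(G_r)`. -/
lemma hexBdry_closedNbhd_gridVerts {r : ℕ} (hr : 1 ≤ r) :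
    hexBdry (gridVerts r ∪ hexNbhd (gridVerts r)) = hexNbhd (gridVerts r) := by
  refine (hexBdry_closedNbhd_subset _).antisymm ?_
  rintro ⟨x, y⟩ hv
  refine ⟨Or.inr hv, ?_⟩
  simp only [Prod.exists, Set.mem_union, mem_gridVerts_iff hr,
    mem_hexNbhd_gridVerts_iff hr, hexAdj, Int.even_iff] at hv ⊢
  by_cases hx : 1 ≤ x
  · exact ⟨x + 1, y, by omega, by omega⟩
  · exact ⟨x - 1, y, by omega, by omega⟩

/-- The grid has `6r²` vertices. -/
lemma ncard_gridVerts {r : ℕ} (hr : 1 ≤ r) : (gridVerts r).ncard = 6 * r ^ 2 := by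
  have hset : gridVerts r = ↑((Finset.range r).biUnion fun j : ℕ =>
      Finset.Icc (2 - 2 * r + j : ℤ) (2 * r - j) ×ˢ {(j + 1 : ℤ), -(j : ℤ)}) := by
    ext ⟨x, y⟩
    simp only [mem_gridVerts_iff hr, Finset.mem_coe, Finset.mem_biUnion, Finset.mem_range,
      Finset.mem_product, Finset.mem_Icc, Finset.mem_insert, Finset.mem_singleton]
    constructor
    · intro h
      by_cases hy : 1 ≤ y
      · exact ⟨(y - 1).toNat, by omega, by omega, by omega⟩
      · exact ⟨(-y).toNat, by omega, by omega, by omega⟩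
    · rintro ⟨j, hj, hx, hy⟩
      omega
  rw [hset, Set.ncard_coe_finset, Finset.card_biUnion]
  · have hcard : ∀ j ∈ Finset.range r, ((Finset.Icc (2 - 2 * r + j : ℤ) (2 * r - j) ×ˢ
        {(j + 1 : ℤ), -(j : ℤ)} : Finset (ℤ × ℤ)).card : ℤ) = 8 * r - 2 - 4 * j := by
      intro j hj
      have := Finset.mem_range.mp hj
      rw [Finset.card_product, Int.card_Icc, Finset.card_pair (by omega)]
      omega
    have hsum : ∀ n : ℕ, ∑ j ∈ Finset.range n, (8 * r - 2 - 4 * j : ℤ) =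
        8 * r * n - 2 * n ^ 2 := by
      intro n
      induction n with
      | zero => simp
      | succ n ih => rw [Finset.sum_range_succ, ih]; push_cast; ring
    zify
    rw [Finset.sum_congr rfl hcard, hsum]
    ring
  · intro i _ j _ hij
    simp only [Function.onFun, Finset.disjoint_left, Prod.forall, Finset.mem_product,
      Finset.mem_insert, Finset.mem_singleton]
    omega

/-- The grid has `6r` outer neighbors. -/
lemma ncard_hexNbhd_gridVerts {r : ℕ} (hr : 1 ≤ r) :
    (hexNbhd (gridVerts r)).ncard = 6 * r := by
  have hset : hexNbhd (gridVerts r) = ↑((Finset.range r).biUnion fun j : ℕ =>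
      ({(1 - 2 * r + j : ℤ), (1 + 2 * r - j : ℤ)} ×ˢ {(j + 1 : ℤ), -(j : ℤ)}) ∪
      ({(2 - r + 2 * j : ℤ)} ×ˢ {(r + 1 : ℤ), -(r : ℤ)} : Finset (ℤ × ℤ))) := by
    ext ⟨x, y⟩
    simp only [mem_hexNbhd_gridVerts_iff hr, Int.even_iff, Finset.mem_coe, Finset.mem_biUnion,
      Finset.mem_range, Finset.mem_union, Finset.mem_product, Finset.mem_insert,
      Finset.mem_singleton]
    constructor
    · rintro (h | h)
      · by_cases hy : 1 ≤ y
        · exact ⟨(y - 1).toNat, by omega, by omega⟩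
        · exact ⟨(-y).toNat, by omega, by omega⟩
      · exact ⟨((x + r - 2) / 2).toNat, by omega, by omega⟩
    · rintro ⟨j, hj, h⟩
      omega
  rw [hset, Set.ncard_coe_finset, Finset.card_biUnion]
  · rw [Finset.sum_const_nat (m := 6), Finset.card_range, mul_comm]
    intro j hj
    have := Finset.mem_range.mp hj
    rw [Finset.card_union_of_disjoint, Finset.card_product, Finset.card_product,
      Finset.card_pair (by omega), Finset.card_pair (by omega), Finset.card_pair (by omega),
      Finset.card_singleton]
    simp only [Finset.disjoint_left, Prod.forall, Finset.mem_product,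
      Finset.mem_insert, Finset.mem_singleton]
    omega
  · intro i hi j hj hij
    have hi := Finset.mem_range.mp hi
    have hj := Finset.mem_range.mp hj
    simp only [Function.onFun, Finset.disjoint_left, Prod.forall, Finset.mem_union,
      Finset.mem_product, Finset.mem_insert, Finset.mem_singleton]
    omega

/-- The closed neighborhood of the grid has `6r² + 6r` vertices. -/
lemma ncard_closedNbhd_gridVerts {r : ℕ} (hr : 1 ≤ r) :
    (gridVerts r ∪ hexNbhd (gridVerts r)).ncard = 6 * r ^ 2 + 6 * r := by
  have hV := ncard_gridVerts hr
  have hN := ncard_hexNbhd_gridVerts hr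
  rw [Set.ncard_union_eq _ (Set.finite_of_ncard_pos (by rw [hV]; positivity))
    (Set.finite_of_ncard_pos (by rw [hN]; positivity)), hV, hN]
  exact Set.disjoint_right.mpr fun _ hv => hv.1

/-- For every `r ≥ 1`, the set `W_r = V(G_r) ∪ 𝒩(V(G_r))` satisfies `|W_r| = 6r² + 6r`
and `|ℬ(W_r)| = 6r`, hence `|ℬ(W_r)| = √6 · √(|W_r| + 3/2) - 3`: the boundary
isoperimetric inequality is tight for these sets. -/
theorem boundary_isoperimetric_tight (r : ℕ) (hr : 1 ≤ r) :
    (gridVerts r ∪ hexNbhd (gridVerts r)).ncard = 6*r^2 + 6*r ∧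
    (hexBdry (gridVerts r ∪ hexNbhd (gridVerts r))).ncard = 6*r ∧
    ((hexBdry (gridVerts r ∪ hexNbhd (gridVerts r))).ncard : ℝ) =
      Real.sqrt 6 * Real.sqrt (((gridVerts r ∪ hexNbhd (gridVerts r)).ncard : ℝ) + 3/2) - 3 := by
  rw [hexBdry_closedNbhd_gridVerts hr, ncard_closedNbhd_gridVerts hr, ncard_hexNbhd_gridVerts hr]
  refine ⟨rfl, rfl, ?_⟩
  have hsq : (6 : ℝ) * (((6 * r ^ 2 + 6 * r : ℕ) : ℝ) + 3 / 2) = (6 * r + 3) ^ 2 := by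
    push_cast
    ring
  rw [← Real.sqrt_mul (by norm_num), hsq, Real.sqrt_sq (by positivity)]
  push_cast
  ring
end

section
/- For every finite nonempty subset W of the vertices of the infinite hexagonal grid G∞, no vertex of G∞ is an outermost neighbor (with respect to W) for all three directions simultaneously; that is, every vertex is an outermost neighbor for at most two of the three directions. -/
/-- A vertex is determined by its direction-`i` row and its parameter along that row. -/
theorem eq_of_rowInd_eq_of_rowParam_eq {i : Fin 3} {u w : ℤ × ℤ}
    (hind : rowInd i u = rowInd i w) (hparam : rowParam i u = rowParam i w) : u = w := by
  obtain ⟨a, b⟩ := u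
  obtain ⟨c, d⟩ := w
  fin_cases i <;> simp [rowInd, rowParam, Int.fdiv_eq_ediv_of_nonneg] at hind hparam ⊢ <;> omega

/-- Of the two neighbors in its direction-`i` row of an outermost neighbor for direction `i`,
exactly one belongs to `W`. -/
theorem IsOutermostNeighbor.mem_iff_notMem {W : Set (ℤ × ℤ)} {i : Fin 3} {v u w : ℤ × ℤ}
    (h : IsOutermostNeighbor W i v)
    (hu : rowInd i u = rowInd i v) (hu' : rowParam i u = rowParam i v + 1)
    (hw : rowInd i w = rowInd i v) (hw' : rowParam i w = rowParam i v - 1) :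
    u ∈ W ↔ w ∉ W := by
  rcases h with ⟨⟨z, ⟨hzW, hz⟩, hz'⟩, hbound⟩ | ⟨⟨z, ⟨hzW, hz⟩, hz'⟩, hbound⟩
  · obtain rfl : z = u := eq_of_rowInd_eq_of_rowParam_eq (hz.trans hu.symm) (hz'.trans hu'.symm)
    refine iff_of_true hzW fun hwW => ?_
    have := hbound _ ⟨w, ⟨hwW, hw⟩, rfl⟩
    omega
  · obtain rfl : z = w := eq_of_rowInd_eq_of_rowParam_eq (hz.trans hw.symm) (hz'.trans hw'.symm)
    refine iff_of_false (fun huW => ?_) (not_not_intro hzW)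
    have := hbound _ ⟨u, ⟨huW, hu⟩, rfl⟩
    omega

/-- No vertex of the infinite hexagonal grid is an outermost neighbor (with respect to a
finite nonempty set `W`) for all three directions simultaneously. -/
theorem outermost_neighbor_at_most_two_directions (W : Set (ℤ × ℤ)) (hW : W.Finite)
    (hne : W.Nonempty) (v : ℤ × ℤ) :
    ¬ (∀ i : Fin 3, IsOutermostNeighbor W i v) := by
  intro h
  obtain ⟨x, y⟩ := v
  have h₁ : (x + 1, y) ∈ W ↔ (x - 1, y) ∉ W :=
    (h 0).mem_iff_notMem rfl rfl rfl rfl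
  rcases Int.even_or_odd (x + y) with ⟨k, hk⟩ | ⟨k, hk⟩
  · have h₂ : (x, y + 1) ∈ W ↔ (x - 1, y) ∉ W := by
      apply (h 1).mem_iff_notMem <;>
        simp only [rowInd, rowParam, Int.fdiv_eq_ediv_of_nonneg _ zero_le_two] <;> omega
    have h₃ : (x + 1, y) ∈ W ↔ (x, y + 1) ∉ W := by
      apply (h 2).mem_iff_notMem <;>
        simp only [rowInd, rowParam, Int.fdiv_eq_ediv_of_nonneg _ zero_le_two] <;> omega
    tauto
  · have h₂ : (x + 1, y) ∈ W ↔ (x, y - 1) ∉ W := by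
      apply (h 1).mem_iff_notMem <;>
        simp only [rowInd, rowParam, Int.fdiv_eq_ediv_of_nonneg _ zero_le_two] <;> omega
    have h₃ : (x, y - 1) ∈ W ↔ (x - 1, y) ∉ W := by
      apply (h 2).mem_iff_notMem <;>
        simp only [rowInd, rowParam, Int.fdiv_eq_ediv_of_nonneg _ zero_le_two] <;> omega
    tauto
end

section
/- For every finite nonempty subset W of the vertices of the infinite hexagonal grid G∞, the number of neighbor vertices satisfies |𝒩(W)| ≥ l₁(W) + l₂(W) + l₃(W), where l_i(W) is the number of direction-i rows containing a vertex of W. -/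
/-- The shift by one vertex along direction-`i` rows, increasing the parameter `rowParam i`. -/
def rowShift : Fin 3 → Equiv.Perm (ℤ × ℤ)
  | 0 =>
    { toFun := fun v => (v.1 + 1, v.2)
      invFun := fun v => (v.1 - 1, v.2)
      left_inv := fun v => by simp
      right_inv := fun v => by simp }
  | 1 =>
    { toFun := fun v => if (v.1 + v.2) % 2 = 0 then (v.1, v.2 + 1) else (v.1 + 1, v.2)
      invFun := fun v => if (v.1 + v.2) % 2 = 0 then (v.1 - 1, v.2) else (v.1, v.2 - 1)
      left_inv := fun v => by grind
      right_inv := fun v => by grind }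
  | 2 =>
    { toFun := fun v => if (v.1 + v.2) % 2 = 0 then (v.1 + 1, v.2) else (v.1, v.2 - 1)
      invFun := fun v => if (v.1 + v.2) % 2 = 0 then (v.1, v.2 + 1) else (v.1 - 1, v.2)
      left_inv := fun v => by grind
      right_inv := fun v => by grind }

lemma rowInd_rowShift (i : Fin 3) (v : ℤ × ℤ) : rowInd i (rowShift i v) = rowInd i v := by
  fin_cases i <;> simp [rowInd, rowShift, Int.fdiv_eq_ediv_of_nonneg] <;> split_ifs <;>
    dsimp only <;> omega

lemma rowParam_rowShift (i : Fin 3) (v : ℤ × ℤ) :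
    rowParam i (rowShift i v) = rowParam i v + 1 := by
  fin_cases i <;> simp [rowParam, rowShift] <;> split_ifs <;> dsimp only <;> omega

lemma hexAdj_rowShift_symm (i : Fin 3) (v : ℤ × ℤ) : hexAdj v ((rowShift i).symm v) := by
  fin_cases i <;> simp [hexAdj, rowShift, Int.even_iff] <;> split_ifs <;> dsimp only <;> omega

lemma hexAdj_rowShift (i : Fin 3) (v : ℤ × ℤ) : hexAdj v (rowShift i v) := by
  fin_cases i <;> simp [hexAdj, rowShift, Int.even_iff] <;> split_ifs <;> dsimp only <;> omega

/-- The points at which the orbits of `e` leave `W` and stay outside for at least two steps. -/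
def exitSet {V : Type*} (e : Equiv.Perm V) (W : Set V) : Set V :=
  {v | v ∉ W ∧ e.symm v ∈ W ∧ e v ∉ W}

/-- If `ind` is constant and `param` increasing along the orbits of `e`, then a finite set `W`
has an exit point on each level of `ind` that it meets. -/
lemma ncard_image_le_ncard_exitSet {V : Type*} {W : Set V} (hW : W.Finite) (e : Equiv.Perm V)
    (ind param : V → ℤ) (hind : ∀ v, ind (e v) = ind v) (hparam : ∀ v, param v < param (e v)) :
    (ind '' W).ncard ≤ (exitSet e W).ncard := by
  have hfin : (exitSet e W).Finite :=
    (hW.image e).subset fun v hv => ⟨e.symm v, hv.2.1, e.apply_symm_apply v⟩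
  refine (Set.ncard_le_ncard ?_ (hfin.image ind)).trans (Set.ncard_image_le hfin)
  rintro _ ⟨w, hw, rfl⟩
  obtain ⟨m, ⟨hmW, hm⟩, hmax⟩ := Set.exists_max_image {u ∈ W | ind u = ind w} param
    (hW.subset (Set.sep_subset _ _)) ⟨w, hw, rfl⟩
  refine ⟨e m, ⟨fun h => ?_, by simpa using hmW, fun h => ?_⟩, by rw [hind, hm]⟩
  · exact (hparam m).not_ge (hmax _ ⟨h, by rw [hind, hm]⟩)
  · exact ((hparam m).trans (hparam _)).not_ge (hmax _ ⟨h, by rw [hind, hind, hm]⟩)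

lemma exitSet_rowShift_subset (W : Set (ℤ × ℤ)) (i : Fin 3) :
    exitSet (rowShift i) W ⊆ hexNbhd W :=
  fun v hv => ⟨hv.1, _, hv.2.1, hexAdj_rowShift_symm i v⟩

lemma exitSet_rowShift_symm_subset (W : Set (ℤ × ℤ)) (i : Fin 3) :
    exitSet (rowShift i).symm W ⊆ hexNbhd W :=
  fun v hv => ⟨hv.1, _, hv.2.1, hexAdj_rowShift i v⟩

lemma ncard_rowInd_image_le {W : Set (ℤ × ℤ)} (hW : W.Finite) (i : Fin 3) :
    2 * (rowInd i '' W).ncard ≤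
      (exitSet (rowShift i) W).ncard + (exitSet (rowShift i).symm W).ncard := by
  have h₁ := ncard_image_le_ncard_exitSet hW (rowShift i) (rowInd i) (rowParam i)
    (rowInd_rowShift i) fun v => by rw [rowParam_rowShift]; omega
  have h₂ := ncard_image_le_ncard_exitSet hW (rowShift i).symm (rowInd i) (fun v => -rowParam i v)
    (fun v => by rw [← rowInd_rowShift, Equiv.apply_symm_apply]) fun v => by
      have := rowParam_rowShift i ((rowShift i).symm v)
      rw [Equiv.apply_symm_apply] at this
      omega
  omega

open Classical in
/-- No vertex is an exit point for all three directions: its three neighbors would be pairwise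
separated by `W`. -/
lemma sum_exitSet_indicator_le_two (W : Set (ℤ × ℤ)) (v : ℤ × ℤ) :
    ∑ i, ((if v ∈ exitSet (rowShift i) W then 1 else 0) +
      (if v ∈ exitSet (rowShift i).symm W then 1 else 0)) ≤ 2 := by
  simp only [Fin.sum_univ_three, exitSet, rowShift, Set.mem_ofPred_eq, Equiv.symm_symm,
    Equiv.coe_fn_mk, Equiv.coe_fn_symm_mk]
  by_cases hv : (v.1 + v.2) % 2 = 0 <;> simp only [hv, if_true, if_false]
  · by_cases hl : (v.1 - 1, v.2) ∈ W <;> by_cases hr : (v.1 + 1, v.2) ∈ W <;>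
      by_cases hu : (v.1, v.2 + 1) ∈ W <;> simp [hl, hr, hu] <;> split_ifs <;> simp
  · by_cases hl : (v.1 - 1, v.2) ∈ W <;> by_cases hr : (v.1 + 1, v.2) ∈ W <;>
      by_cases hd : (v.1, v.2 - 1) ∈ W <;> simp [hl, hr, hd] <;> split_ifs <;> simp

lemma ncard_eq_sum_indicator {V : Type*} {A : Set V} {N : Finset V} (h : A ⊆ N)
    [DecidablePred (· ∈ A)] : A.ncard = ∑ v ∈ N, if v ∈ A then 1 else 0 := by
  rw [← Finset.card_filter, ← Set.ncard_coe_finset]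
  congr 1
  ext v
  simpa using fun hv => h hv

/-- For every finite nonempty vertex set `W`, `|𝒩(W)| ≥ l₁(W) + l₂(W) + l₃(W)`, where
`l_i(W)` is the number of gray direction-`i` rows. -/
theorem nbhd_ge_sum_gray_rows (W : Set (ℤ × ℤ)) (hW : W.Finite) (hne : W.Nonempty) :
    (rowInd 0 '' W).ncard + (rowInd 1 '' W).ncard + (rowInd 2 '' W).ncard ≤
      (hexNbhd W).ncard := by
  classical
  obtain ⟨N, hN⟩ := (finite_hexNbhd hW).exists_finset_coe
  have key : ∑ i, ((exitSet (rowShift i) W).ncard + (exitSet (rowShift i).symm W).ncard) ≤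
      N.card * 2 := by
    simp only [ncard_eq_sum_indicator (hN ▸ exitSet_rowShift_subset W _),
      ncard_eq_sum_indicator (hN ▸ exitSet_rowShift_symm_subset W _), ← Finset.sum_add_distrib]
    rw [Finset.sum_comm]
    exact Finset.sum_le_card_nsmul _ _ _ fun v _ => sum_exitSet_indicator_le_two W v
  rw [← hN, Set.ncard_coe_finset]
  rw [Fin.sum_univ_three] at key
  have h₀ := ncard_rowInd_image_le hW 0
  have h₁ := ncard_rowInd_image_le hW 1
  have h₂ := ncard_rowInd_image_le hW 2
  omega
end

section
/- Let W be a finite nonempty subset of the vertices of the infinite hexagonal grid G∞ that has no bad rows in any of the three directions (i.e. for each i ∈ {1,2,3} the index set I_i(W) is a set of consecutive integers), and write l_i = l_i(W). Then |W| ≤ −(l₁² + l₂² + l₃²)/2 + l₁l₂ + l₁l₃ + l₂l₃. -/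
/-- A finite nonempty consecutive set of integers is a closed interval. -/
lemma ConsecutiveSet.eq_Icc {S : Set ℤ} (hS : ConsecutiveSet S) (hfin : S.Finite)
    (hne : S.Nonempty) : ∃ a b : ℤ, a ≤ b ∧ S = Set.Icc a b := by
  obtain ⟨a, ha, hmin⟩ := Set.exists_min_image S id hfin hne
  obtain ⟨b, hb, hmax⟩ := Set.exists_max_image S id hfin hne
  refine ⟨a, b, hmin b hb, Set.Subset.antisymm (fun k hk => ⟨hmin k hk, hmax k hk⟩) ?_⟩
  exact fun k hk => hS a ha b hb k hk.1 hk.2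

/-- The vertex with row indices `a` in direction 2, `b` in direction 3 and `a + b + e` in
direction 1, where `e` is `0` or `1`. -/
def vertexOfRows (a b e : ℤ) : ℤ × ℤ := (b - a, a + b + e)

/-- The vertices whose direction-2 and direction-3 rows lie in given intervals. -/
noncomputable def rowBox (a₀ a₁ b₀ b₁ : ℤ) : Finset (ℤ × ℤ) :=
  (Finset.Icc a₀ a₁ ×ˢ (Finset.Icc b₀ b₁ ×ˢ Finset.Icc (0 : ℤ) 1)).image
    fun t => vertexOfRows t.1 t.2.1 t.2.2

lemma mem_rowBox {a₀ a₁ b₀ b₁ : ℤ} {v : ℤ × ℤ} :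
    v ∈ rowBox a₀ a₁ b₀ b₁ ↔
      rowInd 1 v ∈ Set.Icc a₀ a₁ ∧ rowInd 2 v ∈ Set.Icc b₀ b₁ := by
  obtain ⟨x, y⟩ := v
  simp only [rowBox, vertexOfRows, rowInd, Finset.mem_image, Finset.mem_product, Finset.mem_Icc,
    Set.mem_Icc, Prod.exists, Prod.mk.injEq, Int.fdiv_eq_ediv_of_nonneg _ (zero_le_two (α := ℤ))]
  constructor
  · rintro ⟨a, b, e, h, rfl, rfl⟩
    omega
  · intro h
    exact ⟨(y - x) / 2, (x + y) / 2, (x + y) % 2, by omega, by omega, by omega⟩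

lemma card_rowBox_le {a₀ a₁ b₀ b₁ : ℤ} (ha : a₀ ≤ a₁) (hb : b₀ ≤ b₁) :
    ((rowBox a₀ a₁ b₀ b₁).card : ℤ) ≤ 2 * (a₁ + 1 - a₀) * (b₁ + 1 - b₀) := by
  have h : (rowBox a₀ a₁ b₀ b₁).card ≤ _ := Finset.card_image_le
  simp only [Finset.card_product, Int.card_Icc] at h
  zify at h
  rw [Int.toNat_of_nonneg (by omega), Int.toNat_of_nonneg (by omega)] at h
  norm_num at h
  linarith

/-- The corner of the box at its minimal rows contains at least `p ^ 2` vertices below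
height `a₀ + b₀ + p`. -/
lemma sq_le_card_rowBox_filter_lt {a₀ a₁ b₀ b₁ p : ℤ} (hp : 0 ≤ p) (ha : p ≤ a₁ + 1 - a₀)
    (hb : p ≤ b₁ + 1 - b₀) :
    p ^ 2 ≤ (((rowBox a₀ a₁ b₀ b₁).filter fun v => v.2 < a₀ + b₀ + p).card : ℤ) := by
  have h := Finset.card_le_card_of_injOn
    (s := Finset.Ico 0 p ×ˢ Finset.Ico 0 p)
    (t := (rowBox a₀ a₁ b₀ b₁).filter fun v => v.2 < a₀ + b₀ + p)
    (fun t => if t.1 + t.2 < p then vertexOfRows (a₀ + t.1) (b₀ + t.2) 0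
      else vertexOfRows (a₀ + (p - 1 - t.1)) (b₀ + (p - 1 - t.2)) 1) ?_ ?_
  · simp only [Finset.card_product, Int.card_Ico, sub_zero] at h
    zify at h
    rw [Int.toNat_of_nonneg hp] at h
    linarith
  · rintro ⟨i, j⟩ hij
    simp only [Finset.coe_product, Finset.coe_Ico, Set.mem_prod, Set.mem_Ico] at hij
    simp only [Finset.coe_filter, Set.mem_ofPred_eq, mem_rowBox, rowInd, Set.mem_Icc,
      Int.fdiv_eq_ediv_of_nonneg _ (zero_le_two (α := ℤ))]
    split_ifs <;> simp only [vertexOfRows] <;> omega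
  · rintro ⟨i, j⟩ hij ⟨k, l⟩ hkl heq
    simp only [Finset.coe_product, Finset.coe_Ico, Set.mem_prod, Set.mem_Ico] at hij hkl
    simp only at heq
    split_ifs at heq <;> simp only [vertexOfRows, Prod.mk.injEq] at heq <;>
      simp only [Prod.mk.injEq] <;> omega

/-- The corner of the box at its maximal rows contains at least `q ^ 2` vertices above
height `a₁ + b₁ + 1 - q`. -/
lemma sq_le_card_rowBox_filter_gt {a₀ a₁ b₀ b₁ q : ℤ} (hq : 0 ≤ q) (ha : q ≤ a₁ + 1 - a₀)
    (hb : q ≤ b₁ + 1 - b₀) :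
    q ^ 2 ≤ (((rowBox a₀ a₁ b₀ b₁).filter fun v => a₁ + b₁ + 1 - q < v.2).card : ℤ) := by
  have h := Finset.card_le_card_of_injOn
    (s := Finset.Ico 0 q ×ˢ Finset.Ico 0 q)
    (t := (rowBox a₀ a₁ b₀ b₁).filter fun v => a₁ + b₁ + 1 - q < v.2)
    (fun t => if t.1 + t.2 < q then vertexOfRows (a₁ - t.1) (b₁ - t.2) 1
      else vertexOfRows (a₁ - (q - 1 - t.1)) (b₁ - (q - 1 - t.2)) 0) ?_ ?_
  · simp only [Finset.card_product, Int.card_Ico, sub_zero] at h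
    zify at h
    rw [Int.toNat_of_nonneg hq] at h
    linarith
  · rintro ⟨i, j⟩ hij
    simp only [Finset.coe_product, Finset.coe_Ico, Set.mem_prod, Set.mem_Ico] at hij
    simp only [Finset.coe_filter, Set.mem_ofPred_eq, mem_rowBox, rowInd, Set.mem_Icc,
      Int.fdiv_eq_ediv_of_nonneg _ (zero_le_two (α := ℤ))]
    split_ifs <;> simp only [vertexOfRows] <;> omega
  · rintro ⟨i, j⟩ hij ⟨k, l⟩ hkl heq
    simp only [Finset.coe_product, Finset.coe_Ico, Set.mem_prod, Set.mem_Ico] at hij hkl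
    simp only at heq
    split_ifs at heq <;> simp only [vertexOfRows, Prod.mk.injEq] at heq <;>
      simp only [Prod.mk.injEq] <;> omega

/-- The direction-1 index of a vertex exceeds the sum of the other two by `0` or `1`. -/
lemma rowInd_zero_mem_Icc (v : ℤ × ℤ) :
    rowInd 0 v ∈ Set.Icc (rowInd 1 v + rowInd 2 v) (rowInd 1 v + rowInd 2 v + 1) := by
  simp only [rowInd, Set.mem_Icc, Int.fdiv_eq_ediv_of_nonneg _ (zero_le_two (α := ℤ))]
  omega

lemma ncard_Icc_int {a b : ℤ} (h : a ≤ b) : ((Set.Icc a b).ncard : ℤ) = b + 1 - a := by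
  rw [← Finset.coe_Icc, Set.ncard_coe_finset, Int.card_Icc, Int.toNat_of_nonneg (by omega)]

/-- If a finite nonempty vertex set `W` has no bad rows in any direction, then
`|W| ≤ -(l₁² + l₂² + l₃²)/2 + l₁l₂ + l₁l₃ + l₂l₃` with `l_i = l_i(W)`. -/
theorem card_le_of_no_bad_rows (W : Set (ℤ × ℤ)) (hW : W.Finite) (hne : W.Nonempty)
    (hgood : ∀ i : Fin 3, ConsecutiveSet (rowInd i '' W)) :
    (W.ncard : ℝ) ≤
      -((((rowInd 0 '' W).ncard : ℝ))^2 + (((rowInd 1 '' W).ncard : ℝ))^2 +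
          (((rowInd 2 '' W).ncard : ℝ))^2) / 2 +
        (((rowInd 0 '' W).ncard : ℝ) * ((rowInd 1 '' W).ncard : ℝ) +
          ((rowInd 0 '' W).ncard : ℝ) * ((rowInd 2 '' W).ncard : ℝ) +
          ((rowInd 1 '' W).ncard : ℝ) * ((rowInd 2 '' W).ncard : ℝ)) := by
  obtain ⟨c₀, c₁, hc, hC⟩ := (hgood 0).eq_Icc (hW.image _) (hne.image _)
  obtain ⟨a₀, a₁, ha, hA⟩ := (hgood 1).eq_Icc (hW.image _) (hne.image _)
  obtain ⟨b₀, b₁, hb, hB⟩ := (hgood 2).eq_Icc (hW.image _) (hne.image _)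
  have hbound : ∀ w ∈ W, rowInd 0 w ∈ Set.Icc c₀ c₁ ∧ rowInd 1 w ∈ Set.Icc a₀ a₁ ∧
      rowInd 2 w ∈ Set.Icc b₀ b₁ := fun w hw =>
    ⟨hC ▸ Set.mem_image_of_mem _ hw, hA ▸ Set.mem_image_of_mem _ hw,
      hB ▸ Set.mem_image_of_mem _ hw⟩
  have hattain : ∀ (i : Fin 3) (k l u : ℤ), rowInd i '' W = Set.Icc l u → l ≤ k → k ≤ u →
      ∃ r₀ r₁ r₂ : ℤ, (c₀ ≤ r₀ ∧ r₀ ≤ c₁) ∧ (a₀ ≤ r₁ ∧ r₁ ≤ a₁) ∧ (b₀ ≤ r₂ ∧ r₂ ≤ b₁) ∧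
        r₁ + r₂ ≤ r₀ ∧ r₀ ≤ r₁ + r₂ + 1 ∧ ![r₀, r₁, r₂] i = k := by
    intro i k l u hi hl hu
    obtain ⟨w, hw, hwk⟩ : k ∈ rowInd i '' W := hi ▸ ⟨hl, hu⟩
    obtain ⟨h0, h1, h2⟩ := hbound w hw
    refine ⟨_, _, _, h0, h1, h2, (rowInd_zero_mem_Icc w).1, (rowInd_zero_mem_Icc w).2, ?_⟩
    fin_cases i <;> exact hwk
  obtain ⟨p, hp⟩ : ∃ p, p = c₀ - (a₀ + b₀) := ⟨_, rfl⟩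
  obtain ⟨q, hq⟩ : ∃ q, q = a₁ + b₁ + 1 - c₁ := ⟨_, rfl⟩
  have hpq : (0 ≤ p ∧ p ≤ a₁ + 1 - a₀ ∧ p ≤ b₁ + 1 - b₀) ∧
      (0 ≤ q ∧ q ≤ a₁ + 1 - a₀ ∧ q ≤ b₁ + 1 - b₀) := by
    have hc₀ := hattain 0 c₀ _ _ hC le_rfl hc
    have hc₁ := hattain 0 c₁ _ _ hC hc le_rfl
    have ha₀ := hattain 1 a₀ _ _ hA le_rfl ha
    have ha₁ := hattain 1 a₁ _ _ hA ha le_rfl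
    have hb₀ := hattain 2 b₀ _ _ hB le_rfl hb
    have hb₁ := hattain 2 b₁ _ _ hB hb le_rfl
    simp only [Matrix.cons_val] at hc₀ hc₁ ha₀ ha₁ hb₀ hb₁
    omega
  obtain ⟨⟨hp0, hpa, hpb⟩, hq0, hqa, hqb⟩ := hpq
  have hlow := sq_le_card_rowBox_filter_lt hp0 hpa hpb
  have hhigh := sq_le_card_rowBox_filter_gt hq0 hqa hqb
  have hbox := card_rowBox_le ha hb
  set B := rowBox a₀ a₁ b₀ b₁
  set L := B.filter fun v => v.2 < a₀ + b₀ + p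
  set H := B.filter fun v => a₁ + b₁ + 1 - q < v.2
  have hdisj : Disjoint L H := by
    refine Finset.disjoint_filter.2 fun v _ h₁ h₂ => ?_
    omega
  have hdisjW : Disjoint hW.toFinset (L ∪ H) := by
    refine Finset.disjoint_left.2 fun v hv hv' => ?_
    have hv0 : c₀ ≤ v.2 ∧ v.2 ≤ c₁ := (hbound v (hW.mem_toFinset.1 hv)).1
    rcases Finset.mem_union.1 hv' with h | h
    · have := (Finset.mem_filter.1 h).2
      omega
    · have := (Finset.mem_filter.1 h).2
      omega
  have hsub : hW.toFinset ∪ (L ∪ H) ⊆ B := by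
    refine Finset.union_subset (fun v hv => ?_)
      (Finset.union_subset (Finset.filter_subset _ _) (Finset.filter_subset _ _))
    exact mem_rowBox.2 (hbound v (hW.mem_toFinset.1 hv)).2
  have hcard := Finset.card_le_card hsub
  rw [Finset.card_union_of_disjoint hdisjW, Finset.card_union_of_disjoint hdisj,
    ← Set.ncard_eq_toFinset_card W hW] at hcard
  have hmain : (W.ncard : ℤ) + p ^ 2 + q ^ 2 ≤ 2 * (a₁ + 1 - a₀) * (b₁ + 1 - b₀) := by
    zify at hcard
    linarith
  rw [hA, hB, hC]
  have hcR : ((Set.Icc c₀ c₁).ncard : ℝ) = (a₁ + 1 - a₀) + (b₁ + 1 - b₀) - p - q := by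
    have h : ((Set.Icc c₀ c₁).ncard : ℤ) = (a₁ + 1 - a₀) + (b₁ + 1 - b₀) - p - q := by
      rw [ncard_Icc_int hc]
      omega
    exact_mod_cast h
  have haR : ((Set.Icc a₀ a₁).ncard : ℝ) = a₁ + 1 - a₀ := by exact_mod_cast ncard_Icc_int ha
  have hbR : ((Set.Icc b₀ b₁).ncard : ℝ) = b₁ + 1 - b₀ := by exact_mod_cast ncard_Icc_int hb
  have hmainR : (W.ncard : ℝ) + p ^ 2 + q ^ 2 ≤ 2 * (a₁ + 1 - a₀) * (b₁ + 1 - b₀) := by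
    exact_mod_cast hmain
  rw [hcR, haR, hbR]
  nlinarith [sq_nonneg ((p : ℝ) - q)]
end
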